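/- arXiv:1504.05293 — 2 statements merged into one kernel-verified Lean document; each statement's English description precedes it below -/
import Mathlib

section
/- Let n ≡ 1 (mod 2) and let r, s be nonnegative integers with rs ≠ 0 and r + s = (n−1)/2. Then an HW(n; r, s; 3, 7) exists if and only if n ≡ 21 (mod 42), except possibly when n = 21 and r ∈ {2, 4, 6}. Concretely: if an HW(n; r, s; 3, 7) exists then n ≡ 21 (mod 42); and conversely, if n ≡ 21 (mod 42) and either n > 21 or (n = 21 and r ∉ {2, 4, 6}), then an HW(n; r, s; 3, 7) exists. -/
open SimpleGraph

/-- `F` is an `H`-factor (of the complete graph on its vertex type, or of any graph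
containing it): every connected component of `F`, viewed as an induced subgraph,
is isomorphic to `H`.  Since `F` is a graph on all of `V`, it is automatically spanning. -/
def IsHFactor {V W : Type*} (H : SimpleGraph W) (F : SimpleGraph V) : Prop :=
  ∀ c : F.ConnectedComponent, Nonempty (F.induce c.supp ≃g H)

/-- A `C_k`-factor: a spanning subgraph each of whose connected components is a
cycle of length `k` (in particular it is 2-regular). -/
def IsCycleFactor {V : Type*} (k : ℕ) (F : SimpleGraph V) : Prop :=
  IsHFactor (SimpleGraph.cycleGraph k) F

/-- `(G; C_m^r, C_k^s)`: a partition of the edge set of `G` into `r` `C_m`-factors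
and `s` `C_k`-factors. -/
def IsCycleDecomp {V : Type*} (G : SimpleGraph V) (m k r s : ℕ) : Prop :=
  ∃ F : Fin r ⊕ Fin s → SimpleGraph V,
    (∀ i, F i ≤ G) ∧
    (∀ e ∈ G.edgeSet, ∃! i, e ∈ (F i).edgeSet) ∧
    (∀ i : Fin r, IsCycleFactor m (F (Sum.inl i))) ∧
    (∀ j : Fin s, IsCycleFactor k (F (Sum.inr j)))

/-- Explicit cycle-factor structure. -/
def Good {V : Type} (k : ℕ) (F : SimpleGraph V) : Prop :=
  ∃ (I : Type) (e : I × Fin k ≃ V), ∀ a b, F.Adj (e a) (e b) ↔ a.1 = b.1 ∧ (cycleGraph k).Adj a.2 b.2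

theorem Good.comap {V W : Type} {k : ℕ} {F : SimpleGraph V} (h : Good k F) (φ : W ≃ V) :
    Good k (F.comap φ) := by
  obtain ⟨I, e, he⟩ := h
  exact ⟨I, e.trans φ.symm, fun a b => by simp [he]⟩

theorem Good.reach {V I : Type} {k : ℕ} {F : SimpleGraph V} (hk : 2 ≤ k) (e : I × Fin k ≃ V)
    (he : ∀ a b, F.Adj (e a) (e b) ↔ a.1 = b.1 ∧ (cycleGraph k).Adj a.2 b.2) (a b : I × Fin k) :
    F.Reachable (e a) (e b) ↔ a.1 = b.1 := by
  constructor
  · rintro ⟨w⟩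
    have key : ∀ u v : V, F.Walk u v → (e.symm u).1 = (e.symm v).1 := by
      intro u v w
      induction w with
      | nil => rfl
      | cons h p ih =>
        rw [← ih]
        have := (he (e.symm _) (e.symm _)).1 (by simpa using h)
        exact this.1
    simpa using key _ _ w
  · intro h
    obtain ⟨i, x⟩ := a
    obtain ⟨i', y⟩ := b
    simp only at h
    subst h
    obtain ⟨k, rfl⟩ : ∃ k', k = k' + 1 := ⟨k - 1, by omega⟩
    have hc : (cycleGraph (k + 1)).Reachable x y := cycleGraph_connected.preconnected x y
    let f : cycleGraph (k + 1) →g F := ⟨fun z => e (i, z), fun {p q} hpq => (he _ _).2 ⟨rfl, hpq⟩⟩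
    exact hc.map f

theorem Good.isCycleFactor {V : Type} {k : ℕ} {F : SimpleGraph V} (hk : 2 ≤ k) (h : Good k F) :
    IsCycleFactor k F := by
  obtain ⟨I, e, he⟩ := h
  intro c
  induction c using ConnectedComponent.ind with
  | h v =>
    obtain ⟨⟨i, x⟩, rfl⟩ := e.surjective v
    have hmem : ∀ a, e a ∈ (F.connectedComponentMk (e (i, x))).supp ↔ a.1 = i := by
      intro a
      rw [ConnectedComponent.mem_supp_iff, ConnectedComponent.eq]
      exact Good.reach hk e he a (i, x)
    refine ⟨RelIso.symm ⟨⟨fun z => ⟨e (i, z), (hmem _).2 rfl⟩, fun w => (e.symm w.1).2, fun z => by simp, ?_⟩, ?_⟩⟩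
    · rintro ⟨w, hw⟩
      obtain ⟨⟨i', z⟩, rfl⟩ := e.surjective w
      have := (hmem _).1 hw
      simp only at this
      subst this
      simp
    · intro p q
      simp [he]

theorem Good.degree {V : Type} {k : ℕ} {F : SimpleGraph V} (hk : 2 ≤ k) (h : Good k F) (v : V) :
    ∃ a b : V, ∀ w, F.Adj v w → w = a ∨ w = b := by
  obtain ⟨I, e, he⟩ := h
  obtain ⟨⟨i, x⟩, rfl⟩ := e.surjective v
  obtain ⟨k, rfl⟩ : ∃ k', k = k' + 2 := ⟨k - 2, by omega⟩
  refine ⟨e (i, x + 1), e (i, x - 1), fun w hw => ?_⟩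
  obtain ⟨⟨i', y⟩, rfl⟩ := e.surjective w
  obtain ⟨h1, h2⟩ := (he _ _).1 hw
  simp only at h1 h2
  subst h1
  rw [cycleGraph_adj] at h2
  rcases h2 with h2 | h2
  · right
    congr 2
    rw [← h2]; abel
  · left
    congr 2
    rw [← h2]; abel

/-- Build a factor from a surjection. -/
theorem mkFactor {V I : Type} [Fintype V] [Fintype I] {k : ℕ} (hk : 2 ≤ k) (f : I × Fin k → V)
    (hf : Function.Surjective f) (hc : Fintype.card V = Fintype.card I * k) :
    ∃ F : SimpleGraph V, Good k F ∧ ∀ i (x y : Fin k), (y.val = x.val + 1 ∨ (x.val = k - 1 ∧ y.val = 0)) →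
      F.Adj (f (i, x)) (f (i, y)) := by
  classical
  have hb : Function.Bijective f := by
    rw [Fintype.bijective_iff_surjective_and_card]
    exact ⟨hf, by simp [hc]⟩
  let e := Equiv.ofBijective f hb
  have hadj : ∀ a b : I × Fin k, (SimpleGraph.fromRel (fun u v : V => (e.symm u).1 = (e.symm v).1 ∧
      (cycleGraph k).Adj (e.symm u).2 (e.symm v).2)).Adj (e a) (e b) ↔
        a.1 = b.1 ∧ (cycleGraph k).Adj a.2 b.2 := by
    intro a b
    rw [SimpleGraph.fromRel_adj]
    simp only [Equiv.symm_apply_apply, ne_eq, EmbeddingLike.apply_eq_iff_eq]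
    constructor
    · rintro ⟨_, h | h⟩
      · exact h
      · exact ⟨h.1.symm, h.2.symm⟩
    · intro h
      refine ⟨?_, Or.inl h⟩
      rintro rfl
      exact h.2.ne rfl
  refine ⟨_, ⟨I, e, hadj⟩, ?_⟩
  intro i x y hxy
  refine (hadj (i, x) (i, y)).2 ⟨rfl, ?_⟩
  obtain ⟨k, rfl⟩ : ∃ k', k = k' + 2 := ⟨k - 2, by omega⟩
  rw [cycleGraph_adj]
  right
  have hx := x.2
  have hy := y.2
  rw [sub_eq_iff_eq_add]
  apply Fin.ext
  rw [Fin.val_add]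
  simp only [Fin.val_one]
  rcases hxy with h | ⟨h, h'⟩
  · rw [Nat.mod_eq_of_lt] <;> omega
  · rw [h, h']
    have : 1 + (k + 2 - 1) = k + 2 := by omega
    rw [this, Nat.mod_self]

theorem decomp_of_cover {V W : Type} [Fintype W] [DecidableEq W] (φ : W ≃ V) (l3 l7 : List (SimpleGraph V))
    (h3 : ∀ F ∈ l3, Good 3 F) (h7 : ∀ F ∈ l7, Good 7 F)
    (hcov : ∀ u v : V, u ≠ v → ∃ F ∈ l3 ++ l7, F.Adj u v)
    (hcard : 2 * (l3.length + l7.length) + 1 = Fintype.card W) :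
    IsCycleDecomp (⊤ : SimpleGraph W) 3 7 l3.length l7.length := by
  classical
  let F : Fin l3.length ⊕ Fin l7.length → SimpleGraph W := fun i =>
    (Sum.elim (fun i => l3.get i) (fun i => l7.get i) i).comap φ
  have hF3 : ∀ i, Good 3 (F (Sum.inl i)) := fun i => (h3 _ (List.get_mem _ _)).comap φ
  have hF7 : ∀ i, Good 7 (F (Sum.inr i)) := fun i => (h7 _ (List.get_mem _ _)).comap φ
  have hcovF : ∀ u v : W, u ≠ v → ∃ i, (F i).Adj u v := by
    intro u v huv
    obtain ⟨G, hG, hGa⟩ := hcov (φ u) (φ v) (by simpa using huv)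
    rcases List.mem_append.1 hG with hG | hG
    · obtain ⟨i, rfl⟩ := List.get_of_mem hG
      exact ⟨Sum.inl i, hGa⟩
    · obtain ⟨i, rfl⟩ := List.get_of_mem hG
      exact ⟨Sum.inr i, hGa⟩
  have hdeg : ∀ i u, (Finset.univ.filter (fun v => (F i).Adj u v)).card ≤ 2 := by
    intro i u
    have : ∃ a b : W, ∀ w, (F i).Adj u w → w = a ∨ w = b := by
      rcases i with i | i
      · exact (hF3 i).degree (by norm_num) u
      · exact (hF7 i).degree (by norm_num) u
    obtain ⟨a, b, hab⟩ := this
    calc _ ≤ ({a, b} : Finset W).card := Finset.card_le_card (by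
            intro w hw
            simp only [Finset.mem_filter, Finset.mem_univ, true_and] at hw
            simpa using hab w hw)
      _ ≤ 2 := Finset.card_le_two
  have huniq : ∀ u v, u ≠ v → ∃! i, (F i).Adj u v := by
    intro u v huv
    have hsum : ∑ w ∈ Finset.univ.erase u, (Finset.univ.filter (fun i => (F i).Adj u w)).card
        ≤ ∑ w ∈ Finset.univ.erase u, 1 := by
      calc _ ≤ ∑ w, (Finset.univ.filter (fun i => (F i).Adj u w)).card :=
            Finset.sum_le_sum_of_subset (Finset.erase_subset _ _)
        _ = ∑ i, (Finset.univ.filter (fun w => (F i).Adj u w)).card := by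
            simp only [Finset.card_filter]
            exact Finset.sum_comm
        _ ≤ ∑ i : Fin l3.length ⊕ Fin l7.length, 2 := Finset.sum_le_sum (fun i _ => hdeg i u)
        _ = _ := by
            simp [Finset.card_erase_of_mem]
            omega
    have hge : ∀ w ∈ Finset.univ.erase u, 1 ≤ (Finset.univ.filter (fun i => (F i).Adj u w)).card := by
      intro w hw
      obtain ⟨i, hi⟩ := hcovF u w (Ne.symm (Finset.ne_of_mem_erase hw))
      exact Finset.card_pos.2 ⟨i, by simpa using hi⟩
    have heq := (Finset.sum_eq_sum_iff_of_le hge).1 (le_antisymm (Finset.sum_le_sum hge) hsum)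
    have h1 := heq v (by simp [huv.symm])
    obtain ⟨i, hi⟩ := Finset.card_eq_one.1 h1.symm
    refine ⟨i, ?_, ?_⟩
    · have : i ∈ Finset.univ.filter (fun i => (F i).Adj u v) := by rw [hi]; simp
      simpa using this
    · intro j hj
      have : j ∈ Finset.univ.filter (fun i => (F i).Adj u v) := by simpa using hj
      rw [hi] at this
      simpa using this
  refine ⟨F, fun i => le_top, ?_, fun i => (hF3 i).isCycleFactor (by norm_num), fun i => (hF7 i).isCycleFactor (by norm_num)⟩
  intro e he
  induction e using Sym2.ind with
  | h u v =>
    have : u ≠ v := by simpa using he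
    simpa using huniq u v this

theorem factor_dvd {n k : ℕ} {F : SimpleGraph (Fin n)} (h : IsCycleFactor k F) : k ∣ n := by
  classical
  have h1 : ∀ c : F.ConnectedComponent, Fintype.card c.supp = k := by
    intro c
    obtain ⟨e⟩ := h c
    have := Fintype.card_congr e.toEquiv
    rw [this, Fintype.card_fin]
  have h2 : n = ∑ c : F.ConnectedComponent, Fintype.card c.supp := by
    have e : Fin n ≃ Σ c : F.ConnectedComponent, c.supp :=
      (Equiv.sigmaFiberEquiv (fun v => F.connectedComponentMk v)).symm.trans
        (Equiv.sigmaCongrRight (fun c => Equiv.refl _))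
    have := Fintype.card_congr e
    rw [Fintype.card_fin, Fintype.card_sigma] at this
    exact this
  rw [h2]
  exact Finset.dvd_sum (fun c _ => by rw [h1 c])

/-- Vertex set. -/
abbrev VV (m : ℕ) : Type := ZMod m × Fin 21

/-- Point with code `e`, shift `γ`, in position `x`. -/
def pt {m : ℕ} (d x : ZMod m) (γ e : ℕ) : VV m :=
  (x + ((e / 21 : ℕ) : ZMod m) * d, ⟨(e + γ) % 21, Nat.mod_lt _ (by norm_num)⟩)

def nxt (k p : ℕ) : ℕ := cond (Nat.beq (p % k + 1) k) (p + 1 - k) (p + 1)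

theorem dev {m : ℕ} [NeZero m] (d : ZMod m) (k t q g : ℕ) (hk : 2 ≤ k) (hkt : t * k = 21)
    (hqg : q * g = 21) (D : ZMod m → ℕ → ℕ)
    (hs : ∀ y : ZMod m, ∀ l : ℕ, l < 21 → ∃ x, ∃ p < 21, x + ((D x p / 21 : ℕ) : ZMod m) * d = y ∧ D x p % 21 = l) :
    ∃ L : List (SimpleGraph (VV m)), L.length = g ∧ (∀ F ∈ L, Good k F) ∧
      ∀ x γ p, γ < 21 → q ∣ γ → p < 21 →
        ∃ F ∈ L, F.Adj (pt d x γ (D x p)) (pt d x γ (D x (nxt k p))) := by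
  have key : ∀ γ : ℕ, ∃ F : SimpleGraph (VV m), Good k F ∧ ∀ x p, γ < 21 → p < 21 →
      F.Adj (pt d x γ (D x p)) (pt d x γ (D x (nxt k p))) := by
    intro γ
    have hk0 : 0 < k := by omega
    have hsu : Function.Surjective (fun a : (ZMod m × Fin t) × Fin k => pt d a.1.1 γ (D a.1.1 (a.1.2.val * k + a.2.val))) := by
      rintro ⟨y, l⟩
      obtain ⟨x, p, hp, h1, h2⟩ := hs y ((l.val + 21 - γ % 21) % 21) (Nat.mod_lt _ (by norm_num))
      refine ⟨((x, ⟨p / k, by rw [Nat.div_lt_iff_lt_mul hk0]; omega⟩), ⟨p % k, Nat.mod_lt _ hk0⟩), ?_⟩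
      simp only [Nat.div_add_mod']
      unfold pt
      ext1
      · exact h1
      · apply Fin.ext
        simp only
        have := l.2
        omega
    have hca : Fintype.card (VV m) = Fintype.card (ZMod m × Fin t) * k := by
      simp only [Fintype.card_prod, ZMod.card, Fintype.card_fin]
      rw [← hkt, mul_assoc]
    obtain ⟨F, hF, hA⟩ := mkFactor (V := VV m) (I := ZMod m × Fin t) hk
      (fun a => pt d a.1.1 γ (D a.1.1 (a.1.2.val * k + a.2.val))) hsu hca
    · refine ⟨F, hF, fun x p _ hp => ?_⟩
      have h1 : p / k < t := by rw [Nat.div_lt_iff_lt_mul hk0]; omega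
      have h2 : p % k < k := Nat.mod_lt _ hk0
      have h3 : p / k * k + p % k = p := Nat.div_add_mod' p k
      unfold nxt
      cases hb : Nat.beq (p % k + 1) k
      · have hb' : p % k + 1 ≠ k := by
          intro h
          rw [← Nat.beq_eq, hb] at h
          exact absurd h (by simp)
        have := hA (x, ⟨p / k, h1⟩) ⟨p % k, h2⟩ ⟨p % k + 1, by omega⟩ (Or.inl rfl)
        simp only [← add_assoc, h3] at this
        exact this
      · have hb' : p % k + 1 = k := by rwa [Nat.beq_eq] at hb
        have := hA (x, ⟨p / k, h1⟩) ⟨p % k, h2⟩ ⟨0, hk0⟩ (Or.inr ⟨by simp only; omega, rfl⟩)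
        simp only [h3] at this
        have e : p + 1 - k = p / k * k + 0 := by omega
        rw [cond_true, e]
        exact this
  choose F hF hA using key
  refine ⟨(List.range g).map (fun i => F (q * i)), by simp, ?_, ?_⟩
  · intro G hG
    obtain ⟨i, _, rfl⟩ := List.mem_map.1 hG
    exact hF _
  · rintro x γ p hγ ⟨i, rfl⟩ hp
    refine ⟨F (q * i), List.mem_map.2 ⟨i, List.mem_range.2 ?_, rfl⟩, hA _ _ _ hγ hp⟩
    rw [← hqg] at hγ
    exact lt_of_mul_lt_mul_left hγ (Nat.zero_le q)

/-- Edge check. -/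
def ec (q e e' a b w : ℕ) : Bool :=
  cond (Nat.beq (e / 21 + w) (e' / 21))
    (cond (Nat.beq ((e' + (a + 21 - e % 21)) % 21) b)
      (Nat.beq ((a + 21 - e % 21) % 21 % q) 0) false) false

theorem ec_spec {m : ℕ} (d : ZMod m) {q e e' a b w : ℕ} (h : ec q e e' a b w = true) (hq : 0 < q) (u v : VV m)
    (hu : u.2.val = a) (hv : v.2.val = b) (hw : v.1 = u.1 + (w : ZMod m) * d) :
    ∃ γ < 21, q ∣ γ ∧ pt d (u.1 - ((e / 21 : ℕ) : ZMod m) * d) γ e = u ∧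
      pt d (u.1 - ((e / 21 : ℕ) : ZMod m) * d) γ e' = v := by
  unfold ec at h
  simp only [Bool.cond_false_right, Bool.and_eq_true, Nat.beq_eq] at h
  obtain ⟨h1, h2, h3⟩ := h
  have ha : a < 21 := hu ▸ u.2.2
  refine ⟨(a + 21 - e % 21) % 21, Nat.mod_lt _ (by norm_num), Nat.dvd_of_mod_eq_zero h3, ?_, ?_⟩
  · unfold pt
    ext1
    · simp
    · apply Fin.ext
      simp only
      omega
  · unfold pt
    ext1
    · simp only [hw, ← h1]
      push_cast
      ring
    · apply Fin.ext
      simp only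
      omega

def R21 : List ℕ := [0, 1, 2, 3, 4, 5, 6, 7, 8, 9, 10, 11, 12, 13, 14, 15, 16, 17, 18, 19, 20]

theorem mem_R21 {p : ℕ} : p ∈ R21 ↔ p < 21 := by
  have : R21 = List.range 21 := by decide
  rw [this, List.mem_range]

def cks (k q : ℕ) (B : ℕ → ℕ) (a b w : ℕ) : Bool :=
  R21.any fun p => ec q (B p) (B (nxt k p)) a b w || ec q (B (nxt k p)) (B p) a b w

def surjB (B : ℕ → ℕ) : Bool := R21.all fun l => R21.any fun p => Nat.beq (B p % 21) l

theorem constOne {m : ℕ} [NeZero m] (d : ZMod m) (k t q g : ℕ) (hk : 2 ≤ k) (hkt : t * k = 21)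
    (hqg : q * g = 21) (B : ℕ → ℕ) (hB : surjB B = true) :
    ∃ L : List (SimpleGraph (VV m)), L.length = g ∧ (∀ F ∈ L, Good k F) ∧
      ∀ a b w, cks k q B a b w = true → ∀ u v : VV m, u.2.val = a → v.2.val = b →
        v.1 = u.1 + (w : ZMod m) * d → ∃ F ∈ L, F.Adj u v := by
  have hq : 0 < q := by
    rcases Nat.eq_zero_or_pos q with h | h
    · subst h; simp at hqg
    · exact h
  obtain ⟨L, h1, h2, h3⟩ := dev d k t q g hk hkt hqg (fun _ => B) (by
    intro y l hl
    unfold surjB at hB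
    rw [List.all_eq_true] at hB
    have := hB l (mem_R21.2 hl)
    rw [List.any_eq_true] at this
    obtain ⟨p, hp, hpl⟩ := this
    rw [Nat.beq_eq] at hpl
    exact ⟨y - ((B p / 21 : ℕ) : ZMod m) * d, p, mem_R21.1 hp, by simp, hpl⟩)
  refine ⟨L, h1, h2, ?_⟩
  intro a b w hc u v hu hv hw
  unfold cks at hc
  rw [List.any_eq_true] at hc
  obtain ⟨p, hp, hpe⟩ := hc
  rw [mem_R21] at hp
  rw [Bool.or_eq_true] at hpe
  rcases hpe with h | h
  · obtain ⟨γ, hγ, hd, e1, e2⟩ := ec_spec d h hq u v hu hv hw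
    obtain ⟨F, hF, hA⟩ := h3 (u.1 - ((B p / 21 : ℕ) : ZMod m) * d) γ p hγ hd hp
    rw [e1, e2] at hA
    exact ⟨F, hF, hA⟩
  · obtain ⟨γ, hγ, hd, e1, e2⟩ := ec_spec d h hq u v hu hv hw
    obtain ⟨F, hF, hA⟩ := h3 (u.1 - ((B (nxt k p) / 21 : ℕ) : ZMod m) * d) γ p hγ hd hp
    rw [e1, e2] at hA
    exact ⟨F, hF, hA.symm⟩

theorem constFam {m : ℕ} [NeZero m] (d : ZMod m) (k t q g : ℕ) (hk : 2 ≤ k) (hkt : t * k = 21)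
    (hqg : q * g = 21) (Bs : List (ℕ → ℕ)) (hB : Bs.all surjB = true) :
    ∃ L : List (SimpleGraph (VV m)), L.length = Bs.length * g ∧ (∀ F ∈ L, Good k F) ∧
      ∀ a b w, (Bs.any fun B => cks k q B a b w) = true → ∀ u v : VV m, u.2.val = a → v.2.val = b →
        v.1 = u.1 + (w : ZMod m) * d → ∃ F ∈ L, F.Adj u v := by
  induction Bs with
  | nil => exact ⟨[], by simp⟩
  | cons B Bs ih =>
    rw [List.all_cons, Bool.and_eq_true] at hB
    obtain ⟨L, h1, h2, h3⟩ := ih hB.2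
    obtain ⟨L', h1', h2', h3'⟩ := constOne d k t q g hk hkt hqg B hB.1
    refine ⟨L' ++ L, by simp [h1, h1']; ring, ?_, ?_⟩
    · intro F hF
      rcases List.mem_append.1 hF with h | h
      · exact h2' F h
      · exact h2 F h
    · intro a b w hc u v hu hv hw
      rw [List.any_cons, Bool.or_eq_true] at hc
      rcases hc with h | h
      · obtain ⟨F, hF, hA⟩ := h3' a b w h u v hu hv hw
        exact ⟨F, List.mem_append.2 (Or.inl hF), hA⟩
      · obtain ⟨F, hF, hA⟩ := h3 a b w h u v hu hv hw
        exact ⟨F, List.mem_append.2 (Or.inr hF), hA⟩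

/-- `E` can be covered by `r` C3-factors and `s` C7-factors. -/
def Cov {m : ℕ} (E : VV m → VV m → Prop) (r s : ℕ) : Prop :=
  ∃ l3 l7 : List (SimpleGraph (VV m)), l3.length = r ∧ l7.length = s ∧ (∀ F ∈ l3, Good 3 F) ∧
    (∀ F ∈ l7, Good 7 F) ∧ ∀ u v, E u v → ∃ F ∈ l3 ++ l7, F.Adj u v

theorem Cov.add {m : ℕ} {E E' E'' : VV m → VV m → Prop} {r s r' s' : ℕ} (h : Cov E r s) (h' : Cov E' r' s')
    (hE : ∀ u v, E'' u v → E u v ∨ E' u v) : Cov E'' (r + r') (s + s') := by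
  obtain ⟨a, b, h1, h2, h3, h4, h5⟩ := h
  obtain ⟨a', b', h1', h2', h3', h4', h5'⟩ := h'
  refine ⟨a ++ a', b ++ b', by simp [h1, h1'], by simp [h2, h2'], ?_, ?_, ?_⟩
  · intro F hF
    rcases List.mem_append.1 hF with h | h
    exacts [h3 F h, h3' F h]
  · intro F hF
    rcases List.mem_append.1 hF with h | h
    exacts [h4 F h, h4' F h]
  · intro u v huv
    rcases hE u v huv with h | h
    · obtain ⟨F, hF, hA⟩ := h5 u v h
      refine ⟨F, ?_, hA⟩
      simp only [List.mem_append] at hF ⊢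
      tauto
    · obtain ⟨F, hF, hA⟩ := h5' u v h
      refine ⟨F, ?_, hA⟩
      simp only [List.mem_append] at hF ⊢
      tauto

/-- Edges with prescribed weights. -/
def EW {m : ℕ} (W : ℕ → ℕ → List ℕ) (d : ZMod m) (u v : VV m) : Prop :=
  ∃ w ∈ W u.2.val v.2.val, v.1 = u.1 + (w : ZMod m) * d

def chkC (W : ℕ → ℕ → List ℕ) (Bs3 Bs7 : List (ℕ → ℕ)) (q3 q7 : ℕ) : Bool :=
  Bs3.all surjB && (Bs7.all surjB && (R21.all fun a => R21.all fun b => (W a b).all fun w =>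
    (Bs3.any fun B => cks 3 q3 B a b w) || (Bs7.any fun B => cks 7 q7 B a b w)))

theorem constPiece {m : ℕ} [NeZero m] (d : ZMod m) (W : ℕ → ℕ → List ℕ) (Bs3 Bs7 : List (ℕ → ℕ))
    (q3 q7 g3 g7 : ℕ) (h3 : q3 * g3 = 21) (h7 : q7 * g7 = 21) (hc : chkC W Bs3 Bs7 q3 q7 = true) :
    Cov (EW W d) (Bs3.length * g3) (Bs7.length * g7) := by
  unfold chkC at hc
  simp only [Bool.and_eq_true] at hc
  obtain ⟨c3, c7, hc⟩ := hc
  obtain ⟨L, e1, e2, e3⟩ := constFam d 3 7 q3 g3 (by norm_num) (by norm_num) h3 Bs3 c3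
  obtain ⟨L', f1, f2, f3⟩ := constFam d 7 3 q7 g7 (by norm_num) (by norm_num) h7 Bs7 c7
  refine ⟨L, L', e1, f1, e2, f2, ?_⟩
  rintro u v ⟨w, hw, he⟩
  rw [List.all_eq_true] at hc
  have hc := hc u.2.val (mem_R21.2 u.2.2)
  rw [List.all_eq_true] at hc
  have hc := hc v.2.val (mem_R21.2 v.2.2)
  rw [List.all_eq_true] at hc
  have hc := hc w hw
  rw [Bool.or_eq_true] at hc
  rcases hc with h | h
  · obtain ⟨F, hF, hA⟩ := e3 _ _ _ h u v rfl rfl he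
    exact ⟨F, List.mem_append.2 (Or.inl hF), hA⟩
  · obtain ⟨F, hF, hA⟩ := f3 _ _ _ h u v rfl rfl he
    exact ⟨F, List.mem_append.2 (Or.inr hF), hA⟩

/-- Allowed state transitions. -/
def NP : List (ℕ × ℕ) :=
  [(0, 1), (1, 2), (3, 4), (4, 5), (5, 6), (6, 7), (8, 9), (9, 10), (10, 11), (11, 12), (12, 13), (13, 14),
   (2, 0), (2, 3), (2, 8), (7, 0), (7, 3), (7, 8), (14, 0), (14, 3), (14, 8)]

def stOf (k j : ℕ) : ℕ :=
  if k % 3 = 0 then j % 3 else if k % 3 = 2 then (if j < 5 then 3 + j else (j - 5) % 3)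
    else (if j < 7 then 8 + j else (j - 7) % 3)

theorem stOf_np (k j : ℕ) (hk : 3 ≤ k) (hk2 : k % 2 = 1) (hj : j < k) :
    (stOf k j, stOf k ((j + 1) % k)) ∈ NP := by
  have hj' : (j + 1) % k = if j + 1 = k then 0 else j + 1 := by
    split_ifs with h
    · rw [h, Nat.mod_self]
    · exact Nat.mod_eq_of_lt (by omega)
  have key : ∀ a b : ℕ, (a < 15 ∧ b < 15 ∧ ((a ≠ 2 ∧ a ≠ 7 ∧ a ≠ 14 ∧ b = a + 1) ∨
      ((a = 2 ∨ a = 7 ∨ a = 14) ∧ (b = 0 ∨ b = 3 ∨ b = 8)))) → (a, b) ∈ NP := by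
    rintro a b ⟨ha, hb, h⟩
    interval_cases a <;> interval_cases b <;> first | (exfalso; omega) | simp [NP]
  apply key
  rw [hj']
  unfold stOf
  split_ifs <;> omega

theorem walk_exists {m : ℕ} [NeZero m] (hm : m % 2 = 1) (d : ZMod m) (hd : d ≠ 0) :
    ∃ s : ZMod m → ℕ, ∀ x, (s (x - d), s x) ∈ NP := by
  classical
  set k := addOrderOf d with hkdef
  have hkm : k ∣ m := by
    have := addOrderOf_dvd_card (x := d)
    rwa [ZMod.card] at this
  have hk2 : k % 2 = 1 := by
    obtain ⟨c, hc⟩ := hkm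
    rcases Nat.mod_two_eq_zero_or_one k with h | h
    · rw [hc, Nat.mul_mod, h] at hm; simp at hm
    · exact h
  have hk1 : k ≠ 1 := by
    intro h
    exact hd (AddMonoid.addOrderOf_eq_one_iff.1 h)
  have hk3 : 3 ≤ k := by omega
  let H := AddSubgroup.zmultiples d
  have hpos : ∀ x : ZMod m, ∃ j : ℕ, j < k ∧ x = (QuotientAddGroup.mk x : ZMod m ⧸ H).out + j • d := by
    intro x
    have h1 : -(QuotientAddGroup.mk x : ZMod m ⧸ H).out + x ∈ H := by
      rw [← QuotientAddGroup.eq]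
      exact Quotient.out_eq _
    obtain ⟨j, hj⟩ := Finset.mem_image.1 (mem_zmultiples_iff_mem_range_addOrderOf.1 h1)
    refine ⟨j, Finset.mem_range.1 hj.1, ?_⟩
    have h2 := hj.2
    rw [h2]; abel
  choose pos hp1 hp2 using hpos
  refine ⟨fun x => stOf k (pos x), fun x => ?_⟩
  have hq : (QuotientAddGroup.mk (x - d) : ZMod m ⧸ H) = QuotientAddGroup.mk x := by
    rw [QuotientAddGroup.eq]
    have : -(x - d) + x = d := by abel
    rw [this]
    exact AddSubgroup.mem_zmultiples d
  have e1 := hp2 (x - d)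
  have e2 := hp2 x
  rw [hq] at e1
  have e3 : (pos (x - d) + 1) • d = pos x • d := by
    have : (pos (x - d) + 1) • d = pos (x - d) • d + d := by rw [add_smul, one_smul]
    rw [this]
    have h4 : (QuotientAddGroup.mk x : ZMod m ⧸ H).out + (pos (x - d) • d + d)
        = (QuotientAddGroup.mk x : ZMod m ⧸ H).out + pos x • d := by
      rw [← e2, ← add_assoc, ← e1]; abel
    exact add_left_cancel h4
  rw [nsmul_inj_mod] at e3
  rw [← hkdef] at e3
  rw [Nat.mod_eq_of_lt (hp1 x)] at e3
  show (stOf k (pos (x - d)), stOf k (pos x)) ∈ NP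
  rw [← e3]
  exact stOf_np k _ hk3 hk2 (hp1 _)

def surjS (dat : ℕ → ℕ → ℕ) : Bool :=
  NP.all fun P => NP.all fun Q => cond (Nat.beq P.2 Q.1) (R21.all fun l => R21.any fun p =>
    Nat.beq (dat Q.2 p) l || (Nat.beq (dat Q.1 p) (21 + l) || Nat.beq (dat P.1 p) (42 + l))) true

def ckS (k q : ℕ) (dat : ℕ → ℕ → ℕ) (i off a b w : ℕ) : Bool :=
  R21.any fun p => cond (Nat.beq (dat i p / 21) off) (ec q (dat i p) (dat i (nxt k p)) a b w) false ||
    cond (Nat.beq (dat i (nxt k p) / 21) off) (ec q (dat i (nxt k p)) (dat i p) a b w) false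

def chkS (W : ℕ → ℕ → List ℕ) (k q : ℕ) (dat : ℕ → ℕ → ℕ) : Bool :=
  surjS dat && NP.all fun P => R21.all fun a => R21.all fun b => (W a b).all fun w =>
    ckS k q dat P.2 0 a b w || ckS k q dat P.1 1 a b w

theorem walkPiece {m : ℕ} [NeZero m] (hm : m % 2 = 1) (d : ZMod m) (hd : d ≠ 0) (W : ℕ → ℕ → List ℕ)
    (k t q g : ℕ) (hk : 2 ≤ k) (hkt : t * k = 21) (hqg : q * g = 21) (dat : ℕ → ℕ → ℕ)
    (hc : chkS W k q dat = true) :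
    ∃ L : List (SimpleGraph (VV m)), L.length = g ∧ (∀ F ∈ L, Good k F) ∧
      ∀ u v, EW W d u v → ∃ F ∈ L, F.Adj u v := by
  have hq : 0 < q := by
    rcases Nat.eq_zero_or_pos q with h | h
    · subst h; simp at hqg
    · exact h
  unfold chkS at hc
  rw [Bool.and_eq_true] at hc
  obtain ⟨hs, hc⟩ := hc
  obtain ⟨s, hN⟩ := walk_exists hm d hd
  obtain ⟨L, h1, h2, h3⟩ := dev d k t q g hk hkt hqg (fun x p => dat (s x) p) (by
    intro y l hl
    unfold surjS at hs
    rw [List.all_eq_true] at hs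
    have hs := hs _ (hN (y - d))
    rw [List.all_eq_true] at hs
    have hs := hs _ (hN y)
    simp only [Nat.beq_refl, cond_true] at hs
    rw [List.all_eq_true] at hs
    have hs := hs l (mem_R21.2 hl)
    rw [List.any_eq_true] at hs
    obtain ⟨p, hp, hs⟩ := hs
    rw [mem_R21] at hp
    simp only [Bool.or_eq_true, Nat.beq_eq] at hs
    rcases hs with h | h | h
    · refine ⟨y, p, hp, ?_, ?_⟩
      · simp only [h, Nat.div_eq_of_lt hl]; simp
      · simp only [h, Nat.mod_eq_of_lt hl]
    · refine ⟨y - d, p, hp, ?_, ?_⟩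
      · have : (21 + l) / 21 = 1 := by omega
        simp only [h, this]; simp
      · simp only [h]; omega
    · refine ⟨y - d - d, p, hp, ?_, ?_⟩
      · have : (42 + l) / 21 = 2 := by omega
        simp only [h, this]; push_cast; ring
      · simp only [h]; omega)
  refine ⟨L, h1, h2, ?_⟩
  rintro u v ⟨w, hw, he⟩
  rw [List.all_eq_true] at hc
  have hc := hc _ (hN u.1)
  rw [List.all_eq_true] at hc
  have hc := hc u.2.val (mem_R21.2 u.2.2)
  rw [List.all_eq_true] at hc
  have hc := hc v.2.val (mem_R21.2 v.2.2)
  rw [List.all_eq_true] at hc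
  have hc := hc w hw
  have key : ∀ i off, ckS k q dat i off u.2.val v.2.val w = true → s (u.1 - (off : ZMod m) * d) = i →
      ∃ F ∈ L, F.Adj u v := by
    intro i off h hi
    unfold ckS at h
    rw [List.any_eq_true] at h
    obtain ⟨p, hp, h⟩ := h
    rw [mem_R21] at hp
    simp only [Bool.or_eq_true, Bool.cond_false_right, Bool.and_eq_true, Nat.beq_eq] at h
    rcases h with ⟨ho, h⟩ | ⟨ho, h⟩
    · obtain ⟨γ, hγ, hd, e1, e2⟩ := ec_spec d h hq u v rfl rfl he
      obtain ⟨F, hF, hA⟩ := h3 (u.1 - (off : ZMod m) * d) γ p hγ hd hp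
      rw [ho] at e1 e2
      rw [hi, e1, e2] at hA
      exact ⟨F, hF, hA⟩
    · obtain ⟨γ, hγ, hd, e1, e2⟩ := ec_spec d h hq u v rfl rfl he
      obtain ⟨F, hF, hA⟩ := h3 (u.1 - (off : ZMod m) * d) γ p hγ hd hp
      rw [ho] at e1 e2
      rw [hi, e1, e2] at hA
      exact ⟨F, hF, hA.symm⟩
  rw [Bool.or_eq_true] at hc
  rcases hc with h | h
  · exact key _ 0 h (by simp)
  · exact key _ 1 h (by simp)

/-- Bit mask of a list. -/
def mask : List ℕ → ℕ
  | [] => 0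
  | c :: l => Nat.lor (Nat.pow 2 c) (mask l)

theorem mask_testBit (l : List ℕ) (c : ℕ) : (mask l).testBit c = true ↔ c ∈ l := by
  induction l with
  | nil => simp [mask]
  | cons a l ih =>
    have h1 : mask (a :: l) = 2 ^ a ||| mask l := rfl
    rw [h1, Nat.testBit_or, Bool.or_eq_true, ih, Nat.testBit_two_pow, List.mem_cons]
    simp [eq_comm]

def subM (l l' : List ℕ) : Bool := Nat.beq (Nat.land (mask l) (mask l')) (mask l)

theorem subM_spec {l l' : List ℕ} (h : subM l l' = true) {c : ℕ} (hc : c ∈ l) : c ∈ l' := by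
  unfold subM at h
  rw [Nat.beq_eq] at h
  have h1 : mask l &&& mask l' = mask l := h
  rw [← mask_testBit] at hc ⊢
  rw [← h1, Nat.testBit_and, Bool.and_eq_true] at hc
  exact hc.2

def code (e e' γ : ℕ) : List ℕ :=
  cond (Nat.ble (e / 21) (e' / 21)) [441 * (e' / 21 - e / 21) + 21 * ((e + γ) % 21) + (e' + γ) % 21] []

theorem code_spec {q e e' γ a b w : ℕ} (ha : a < 21) (hb : b < 21) (hγ : γ < 21) (hq : γ % q = 0)
    (h : 441 * w + 21 * a + b ∈ code e e' γ) : ec q e e' a b w = true := by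
  unfold code at h
  cases hb : Nat.ble (e / 21) (e' / 21)
  · rw [hb] at h; simp at h
  · rw [hb] at h
    rw [Nat.ble_eq] at hb
    simp only [cond_true, List.mem_singleton] at h
    have h1 : e / 21 + w = e' / 21 := by omega
    have h2 : (e' + (a + 21 - e % 21)) % 21 = b := by omega
    have h3 : (a + 21 - e % 21) % 21 = γ := by omega
    unfold ec
    simp only [Bool.cond_false_right, Bool.and_eq_true, Nat.beq_eq]
    exact ⟨h1, h2, by rw [h3, hq]⟩

def needs (W : ℕ → ℕ → List ℕ) : List ℕ :=
  R21.flatMap fun a => R21.flatMap fun b => (W a b).map fun w => 441 * w + 21 * a + b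

theorem mem_needs {W : ℕ → ℕ → List ℕ} {a b w : ℕ} (ha : a < 21) (hb : b < 21) (hw : w ∈ W a b) :
    441 * w + 21 * a + b ∈ needs W := by
  unfold needs
  simp only [List.mem_flatMap, List.mem_map]
  exact ⟨a, mem_R21.2 ha, b, mem_R21.2 hb, w, hw, rfl⟩

def gam (q : ℕ) : List ℕ := R21.filter fun γ => Nat.beq (γ % q) 0

def codesB (k q : ℕ) (B : ℕ → ℕ) : List ℕ :=
  R21.flatMap fun p => (gam q).flatMap fun γ => code (B p) (B (nxt k p)) γ ++ code (B (nxt k p)) (B p) γ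

theorem codesB_spec {k q : ℕ} {B : ℕ → ℕ} {a b w : ℕ} (ha : a < 21) (hb : b < 21)
    (h : 441 * w + 21 * a + b ∈ codesB k q B) : cks k q B a b w = true := by
  unfold codesB gam at h
  simp only [List.mem_flatMap, List.mem_append, List.mem_filter, Nat.beq_eq, mem_R21] at h
  obtain ⟨p, hp, γ, ⟨hγ, hq⟩, h⟩ := h
  unfold cks
  rw [List.any_eq_true]
  refine ⟨p, mem_R21.2 hp, ?_⟩
  rw [Bool.or_eq_true]
  rcases h with h | h
  · exact Or.inl (code_spec ha hb hγ hq h)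
  · exact Or.inr (code_spec ha hb hγ hq h)

def surjB' (B : ℕ → ℕ) : Bool := subM R21 (R21.map fun p => B p % 21)

theorem surjB_of {B : ℕ → ℕ} (h : surjB' B = true) : surjB B = true := by
  unfold surjB
  rw [List.all_eq_true]
  intro l hl
  have := subM_spec h hl
  rw [List.mem_map] at this
  obtain ⟨p, hp, he⟩ := this
  rw [List.any_eq_true]
  exact ⟨p, hp, by rw [Nat.beq_eq]; exact he⟩

def chkC' (W : ℕ → ℕ → List ℕ) (Bs3 Bs7 : List (ℕ → ℕ)) (q3 q7 : ℕ) : Bool :=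
  Bs3.all surjB' && (Bs7.all surjB' &&
    subM (needs W) (Bs3.flatMap (codesB 3 q3) ++ Bs7.flatMap (codesB 7 q7)))

theorem chkC_of {W : ℕ → ℕ → List ℕ} {Bs3 Bs7 : List (ℕ → ℕ)} {q3 q7 : ℕ}
    (h : chkC' W Bs3 Bs7 q3 q7 = true) : chkC W Bs3 Bs7 q3 q7 = true := by
  unfold chkC' at h
  simp only [Bool.and_eq_true] at h
  obtain ⟨h1, h2, h3⟩ := h
  rw [List.all_eq_true] at h1 h2
  unfold chkC
  simp only [Bool.and_eq_true]
  refine ⟨List.all_eq_true.2 fun B hB => surjB_of (h1 B hB), List.all_eq_true.2 fun B hB => surjB_of (h2 B hB),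
    List.all_eq_true.2 fun a ha => List.all_eq_true.2 fun b hb => List.all_eq_true.2 fun w hw => ?_⟩
  rw [mem_R21] at ha hb
  have := subM_spec h3 (mem_needs ha hb hw)
  rw [Bool.or_eq_true, List.any_eq_true, List.any_eq_true]
  simp only [List.mem_append, List.mem_flatMap] at this
  rcases this with ⟨B, hB, h⟩ | ⟨B, hB, h⟩
  · exact Or.inl ⟨B, hB, codesB_spec ha hb h⟩
  · exact Or.inr ⟨B, hB, codesB_spec ha hb h⟩

def pick (off e : ℕ) : List ℕ := cond (Nat.beq (e / 21) off) [e % 21] []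

theorem mem_pick {off e l : ℕ} (h : l ∈ pick off e) : e = 21 * off + l := by
  unfold pick at h
  cases hb : Nat.beq (e / 21) off
  · rw [hb] at h; simp at h
  · rw [hb] at h
    rw [Nat.beq_eq] at hb
    simp only [cond_true, List.mem_singleton] at h
    omega

def surjS' (dat : ℕ → ℕ → ℕ) : Bool :=
  NP.all fun P => NP.all fun Q => cond (Nat.beq P.2 Q.1) (subM R21 (R21.flatMap fun p =>
    pick 0 (dat Q.2 p) ++ (pick 1 (dat Q.1 p) ++ pick 2 (dat P.1 p)))) true

theorem surjS_of {dat : ℕ → ℕ → ℕ} (h : surjS' dat = true) : surjS dat = true := by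
  unfold surjS' at h
  unfold surjS
  rw [List.all_eq_true] at h ⊢
  intro P hP
  have h := h P hP
  rw [List.all_eq_true] at h ⊢
  intro Q hQ
  have h := h Q hQ
  cases hb : Nat.beq P.2 Q.1
  · rfl
  · rw [hb, cond_true] at h
    rw [cond_true, List.all_eq_true]
    intro l hl
    have h := subM_spec h hl
    simp only [List.mem_flatMap, List.mem_append] at h
    obtain ⟨p, hp, h⟩ := h
    rw [List.any_eq_true]
    refine ⟨p, hp, ?_⟩
    simp only [Bool.or_eq_true, Nat.beq_eq]
    rcases h with h | h | h
    · have := mem_pick h; left; omega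
    · have := mem_pick h; right; left; omega
    · have := mem_pick h; right; right; omega

def codesS (k q : ℕ) (dat : ℕ → ℕ → ℕ) (i off : ℕ) : List ℕ :=
  R21.flatMap fun p =>
    cond (Nat.beq (dat i p / 21) off) ((gam q).flatMap fun γ => code (dat i p) (dat i (nxt k p)) γ) [] ++
    cond (Nat.beq (dat i (nxt k p) / 21) off) ((gam q).flatMap fun γ => code (dat i (nxt k p)) (dat i p) γ) []

theorem mem_condl {b : Bool} {l : List ℕ} {c : ℕ} (h : c ∈ cond b l []) : b = true ∧ c ∈ l := by
  cases b
  · simp at h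
  · exact ⟨rfl, h⟩

theorem codesS_spec {k q : ℕ} {dat : ℕ → ℕ → ℕ} {i off a b w : ℕ} (ha : a < 21) (hb : b < 21)
    (h : 441 * w + 21 * a + b ∈ codesS k q dat i off) : ckS k q dat i off a b w = true := by
  unfold codesS gam at h
  rw [List.mem_flatMap] at h
  obtain ⟨p, hp, h⟩ := h
  unfold ckS
  rw [List.any_eq_true]
  refine ⟨p, hp, ?_⟩
  rw [Bool.or_eq_true]
  rcases List.mem_append.1 h with h | h
  · obtain ⟨h0, h⟩ := mem_condl h
    simp only [List.mem_flatMap, List.mem_filter, Nat.beq_eq, mem_R21] at h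
    obtain ⟨γ, ⟨hγ, hq⟩, h⟩ := h
    left
    rw [h0, cond_true]
    exact code_spec ha hb hγ hq h
  · obtain ⟨h0, h⟩ := mem_condl h
    simp only [List.mem_flatMap, List.mem_filter, Nat.beq_eq, mem_R21] at h
    obtain ⟨γ, ⟨hγ, hq⟩, h⟩ := h
    right
    rw [h0, cond_true]
    exact code_spec ha hb hγ hq h

def chkS' (W : ℕ → ℕ → List ℕ) (k q : ℕ) (dat : ℕ → ℕ → ℕ) : Bool :=
  surjS' dat && NP.all fun P => subM (needs W) (codesS k q dat P.2 0 ++ codesS k q dat P.1 1)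

theorem chkS_of {W : ℕ → ℕ → List ℕ} {k q : ℕ} {dat : ℕ → ℕ → ℕ} (h : chkS' W k q dat = true) :
    chkS W k q dat = true := by
  unfold chkS' at h
  unfold chkS
  rw [Bool.and_eq_true] at h ⊢
  refine ⟨surjS_of h.1, List.all_eq_true.2 fun P hP => ?_⟩
  have h := List.all_eq_true.1 h.2 P hP
  refine List.all_eq_true.2 fun a ha => List.all_eq_true.2 fun b hb => List.all_eq_true.2 fun w hw => ?_
  rw [mem_R21] at ha hb
  have := subM_spec h (mem_needs ha hb hw)
  rw [Bool.or_eq_true]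
  rcases List.mem_append.1 this with h | h
  · exact Or.inl (codesS_spec ha hb h)
  · exact Or.inr (codesS_spec ha hb h)

def wDat : List (List ℕ) :=
  [[6, 24, 0, 42, 39, 3, 33], [15, 33, 0, 36, 9, 51, 24], [18, 36, 48, 6, 39, 9, 33], [6, 24, 0, 
  42, 39, 3, 33], [15, 33, 0, 36, 9, 51, 24], [6, 24, 9, 21, 18, 60, 36], [12, 30, 18, 60, 33, 6, 
  21], [15, 33, 3, 36, 48, 6, 30], [6, 24, 0, 42, 39, 3, 33], [15, 33, 0, 36, 9, 51, 24], [6, 24, 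
  9, 21, 18, 60, 36], [6, 24, 12, 27, 18, 60, 33], [9, 27, 15, 24, 0, 36, 51], [0, 39, 12, 21, 
  51, 9, 33], [15, 33, 6, 48, 36, 3, 39]]

def zDat : List (List ℕ) :=
  [[13, 11, 3, 6, 12, 8, 16], [0, 19, 17, 14, 9, 20, 11], [4, 19, 15, 8, 6, 5, 12], [13, 11, 3, 
  6, 12, 8, 16], [9, 0, 20, 17, 11, 19, 14], [20, 9, 0, 16, 3, 6, 15], [19, 11, 3, 18, 14, 8, 
  17], [4, 3, 15, 17, 10, 11, 9], [6, 11, 12, 8, 3, 13, 16], [19, 16, 0, 3, 18, 14, 20], [0, 4, 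
  11, 2, 8, 7, 16], [15, 4, 7, 1, 0, 12, 9], [19, 16, 13, 15, 17, 8, 2], [19, 10, 9, 5, 4, 20, 
  2], [4, 3, 15, 17, 18, 5, 7]]

def zq : List ℕ :=
  [3, 1, 20, 9, 12, 10, 11]

def zp : List ℕ :=
  [0, 7, 14, 5, 16, 2, 19]

def t0Dat : List ℕ :=
  [42, 5, 30, 62, 82, 24, 2, 56, 27, 58, 11, 55, 33, 73, 38, 7, 36, 71, 106, 102, 46]

def t7Tri : List (List ℕ) :=
  [[0, 32, 49], [1, 26, 57], [1, 33, 50], [2, 22, 42], [2, 27, 49], [2, 31, 60], [2, 36, 46]]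

def t7Dat : List ℕ :=
  [42, 16, 60, 22, 44, 93, 71, 83, 36, 80, 24, 49, 12, 52, 26, 6, 40, 77, 88, 53, 13]

def b4Tri : List (List ℕ) :=
  [[42, 22, 2], [0, 22, 44], [0, 1, 5], [0, 4, 2], [21, 4, 11], [0, 25, 14], [0, 49, 32], [42, 7, 
  41], [0, 10, 47], [21, 52, 17], [21, 10, 41], [21, 55, 8], [0, 13, 38], [21, 13, 62], [42, 16, 
  5], [0, 58, 29], [42, 58, 14], [0, 19, 11], [0, 61, 56], [42, 19, 59]]

def b4Dat : List (List ℕ) :=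
  [[0, 6, 18, 4, 10, 16, 7, 2, 14, 20, 8, 17, 5, 11, 1, 13, 19, 12, 3, 9, 15], [0, 12, 6, 15, 2, 
  17, 9, 4, 13, 14, 8, 7, 1, 16, 18, 5, 20, 19, 10, 11, 3], [0, 8, 2, 1, 10, 3, 15, 18, 12, 20, 
  11, 17, 16, 9, 5, 4, 19, 7, 13, 6, 14], [0, 3, 6, 9, 12, 15, 18, 1, 4, 7, 10, 13, 16, 19, 2, 5, 
  8, 11, 14, 17, 20]]

def b5Tri : List (List ℕ) :=
  [[21, 1, 23], [0, 1, 11], [21, 43, 17], [42, 25, 5], [21, 25, 8], [21, 46, 11], [0, 49, 5], 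
  [42, 7, 14], [0, 7, 41], [0, 10, 47], [21, 10, 59], [0, 31, 20], [0, 34, 44], [21, 13, 53], [0, 
  13, 14], [0, 58, 29], [42, 16, 41], [42, 19, 2], [0, 61, 56]]

def b5Dat : List (List ℕ) :=
  [[0, 16, 7, 19, 17, 5, 9, 12, 20, 8, 10, 15, 11, 3, 1, 6, 2, 4, 13, 18, 14], [0, 19, 11, 13, 1, 
  10, 12, 15, 2, 14, 5, 7, 20, 3, 4, 6, 18, 9, 17, 8, 16], [0, 8, 12, 7, 9, 4, 17, 1, 20, 11, 2, 
  10, 19, 3, 14, 16, 18, 5, 13, 15, 6], [0, 3, 6, 9, 12, 15, 18, 1, 4, 7, 10, 13, 16, 19, 2, 5, 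
  8, 11, 14, 17, 20], [0, 6, 12, 18, 3, 9, 15, 1, 7, 13, 19, 4, 10, 16, 2, 8, 14, 20, 5, 11, 17]]

def b6Tri : List (List ℕ) :=
  [[42, 22, 2], [0, 1, 32], [21, 43, 17], [0, 25, 8], [42, 25, 14], [0, 7, 44], [42, 7, 5], [0, 
  49, 14], [21, 52, 8], [21, 10, 11], [0, 13, 2], [0, 34, 47], [21, 13, 62], [0, 58, 29], [0, 16, 
  38], [42, 16, 41], [0, 61, 56], [42, 19, 59]]

def b6Dat : List (List ℕ) :=
  [[0, 11, 12, 16, 2, 19, 5, 15, 4, 6, 10, 17, 13, 20, 1, 18, 8, 9, 14, 7, 3], [0, 20, 16, 18, 7, 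
  9, 19, 14, 15, 5, 13, 3, 2, 10, 6, 17, 12, 1, 8, 4, 11], [0, 4, 17, 18, 2, 12, 10, 19, 15, 13, 
  9, 20, 7, 11, 16, 6, 5, 1, 14, 3, 8], [0, 3, 6, 9, 12, 15, 18, 1, 4, 7, 10, 13, 16, 19, 2, 5, 
  8, 11, 14, 17, 20], [0, 6, 12, 18, 3, 9, 15, 1, 7, 13, 19, 4, 10, 16, 2, 8, 14, 20, 5, 11, 17], 
  [0, 9, 18, 6, 15, 3, 12, 1, 10, 19, 7, 16, 4, 13, 2, 11, 20, 8, 17, 5, 14]]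

def k1T : List (List ℕ) :=
  [[0, 11, 15, 1, 9, 16, 2, 10, 17, 3, 13, 18, 4, 14, 19, 5, 12, 20, 6, 7, 8]]

def k1S : List (List ℕ) :=
  [[0, 7, 4, 9, 18, 14, 16, 1, 8, 5, 10, 19, 12, 17, 2, 6, 3, 11, 20, 13, 15], [0, 8, 20, 10, 14, 
  15, 5, 1, 6, 18, 11, 12, 16, 3, 2, 7, 19, 9, 13, 17, 4], [0, 14, 7, 17, 5, 18, 10, 1, 12, 8, 
  15, 3, 19, 11, 2, 13, 6, 16, 4, 20, 9], [0, 19, 6, 11, 2, 5, 4, 13, 8, 9, 15, 10, 7, 1, 17, 14, 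
  12, 3, 20, 18, 16], [1, 20, 7, 9, 0, 3, 5, 14, 6, 10, 16, 11, 8, 2, 15, 12, 13, 4, 18, 19, 17], 
  [2, 18, 8, 10, 1, 4, 3, 12, 7, 11, 17, 9, 6, 0, 16, 13, 14, 5, 19, 20, 15], [0, 20, 14, 11, 9, 
  5, 13, 1, 2, 16, 7, 18, 15, 19, 8, 3, 17, 6, 12, 10, 4], [1, 18, 12, 9, 10, 3, 14, 2, 0, 17, 8, 
  19, 16, 20, 6, 4, 15, 7, 13, 11, 5], [2, 19, 13, 10, 11, 4, 12, 0, 1, 15, 6, 20, 17, 18, 7, 5, 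
  16, 8, 14, 9, 3]]

def k2T : List (List ℕ) :=
  [[0, 4, 15, 1, 5, 16, 2, 3, 17, 6, 10, 19, 7, 11, 20, 8, 9, 18, 12, 13, 14], [0, 5, 8, 1, 3, 6, 
  2, 4, 7, 9, 10, 11, 12, 15, 20, 13, 16, 18, 14, 17, 19]]

def k2S : List (List ℕ) :=
  [[0, 20, 8, 4, 10, 16, 14, 1, 18, 6, 5, 11, 17, 12, 2, 19, 7, 3, 9, 15, 13], [0, 17, 20, 13, 5, 
  7, 10, 1, 15, 18, 14, 3, 8, 11, 2, 16, 19, 12, 4, 6, 9], [0, 6, 11, 2, 10, 12, 16, 17, 9, 13, 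
  3, 15, 7, 8, 1, 19, 18, 4, 5, 20, 14], [1, 7, 9, 0, 11, 13, 17, 15, 10, 14, 4, 16, 8, 6, 2, 20, 
  19, 5, 3, 18, 12], [2, 8, 10, 1, 9, 14, 15, 16, 11, 12, 5, 17, 6, 7, 0, 18, 20, 3, 4, 19, 13], 
  [0, 2, 5, 15, 11, 14, 7, 13, 8, 19, 9, 4, 20, 1, 6, 16, 17, 18, 10, 3, 12], [1, 0, 3, 16, 9, 
  12, 8, 14, 6, 20, 10, 5, 18, 2, 7, 17, 15, 19, 11, 4, 13], [2, 1, 4, 17, 10, 13, 6, 12, 7, 18, 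
  11, 3, 19, 0, 8, 15, 16, 20, 9, 5, 14]]

def k3T : List (List ℕ) :=
  [[0, 10, 11, 1, 2, 5, 3, 9, 18, 4, 16, 20, 6, 7, 15, 8, 12, 13, 14, 17, 19], [1, 11, 9, 2, 0, 
  3, 4, 10, 19, 5, 17, 18, 7, 8, 16, 6, 13, 14, 12, 15, 20], [2, 9, 10, 0, 1, 4, 5, 11, 20, 3, 
  15, 19, 8, 6, 17, 7, 14, 12, 13, 16, 18]]

def k3S : List (List ℕ) :=
  [[0, 9, 13, 7, 20, 3, 16, 1, 10, 14, 8, 18, 4, 17, 2, 11, 12, 6, 19, 5, 15], [0, 8, 20, 10, 6, 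
  2, 17, 7, 5, 9, 16, 19, 12, 18, 15, 4, 14, 11, 3, 1, 13], [1, 6, 18, 11, 7, 0, 15, 8, 3, 10, 
  17, 20, 13, 19, 16, 5, 12, 9, 4, 2, 14], [2, 7, 19, 9, 8, 1, 16, 6, 4, 11, 15, 18, 14, 20, 17, 
  3, 13, 10, 5, 0, 12], [0, 6, 3, 4, 8, 11, 19, 14, 5, 13, 2, 20, 18, 1, 12, 16, 17, 7, 9, 15, 
  10], [1, 7, 4, 5, 6, 9, 20, 12, 3, 14, 0, 18, 19, 2, 13, 17, 15, 8, 10, 16, 11], [2, 8, 5, 3, 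
  7, 10, 18, 13, 4, 12, 1, 19, 20, 0, 14, 15, 16, 6, 11, 17, 9]]

def k4T : List (List ℕ) :=
  [[0, 7, 13, 1, 8, 14, 2, 6, 12, 3, 10, 15, 4, 11, 16, 5, 9, 17, 18, 19, 20], [0, 3, 16, 1, 10, 
  13, 2, 17, 19, 4, 12, 15, 5, 6, 8, 7, 14, 18, 9, 11, 20], [1, 4, 17, 2, 11, 14, 0, 15, 20, 5, 
  13, 16, 3, 7, 6, 8, 12, 19, 10, 9, 18], [2, 5, 15, 0, 9, 12, 1, 16, 18, 3, 14, 17, 4, 8, 7, 6, 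
  13, 20, 11, 10, 19]]

def k4S : List (List ℕ) :=
  [[0, 19, 15, 18, 13, 4, 2, 3, 11, 5, 12, 14, 10, 20, 7, 1, 6, 9, 8, 16, 17], [1, 20, 16, 19, 
  14, 5, 0, 4, 9, 3, 13, 12, 11, 18, 8, 2, 7, 10, 6, 17, 15], [2, 18, 17, 20, 12, 3, 1, 5, 10, 4, 
  14, 13, 9, 19, 6, 0, 8, 11, 7, 15, 16], [0, 10, 16, 2, 3, 5, 18, 20, 8, 17, 12, 1, 9, 7, 14, 
  15, 11, 13, 19, 4, 6], [1, 11, 17, 0, 4, 3, 19, 18, 6, 15, 13, 2, 10, 8, 12, 16, 9, 14, 20, 5, 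
  7], [2, 9, 15, 1, 5, 4, 20, 19, 7, 16, 14, 0, 11, 6, 13, 17, 10, 12, 18, 3, 8]]

def k5T : List (List ℕ) :=
  [[0, 1, 2, 3, 12, 18, 4, 13, 19, 5, 14, 20, 6, 11, 16, 7, 9, 17, 8, 10, 15], [0, 10, 12, 1, 11, 
  13, 2, 9, 14, 3, 8, 16, 4, 6, 17, 5, 7, 15, 18, 19, 20], [0, 14, 16, 1, 6, 18, 2, 5, 8, 3, 7, 
  13, 4, 9, 12, 10, 11, 20, 15, 17, 19], [1, 12, 17, 2, 7, 19, 0, 3, 6, 4, 8, 14, 5, 10, 13, 11, 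
  9, 18, 16, 15, 20], [2, 13, 15, 0, 8, 20, 1, 4, 7, 5, 6, 12, 3, 11, 14, 9, 10, 19, 17, 16, 18]]

def k5S : List (List ℕ) :=
  [[0, 4, 20, 9, 6, 14, 15, 1, 5, 18, 10, 7, 12, 16, 2, 3, 19, 11, 8, 13, 17], [0, 17, 3, 9, 13, 
  6, 19, 1, 15, 4, 10, 14, 7, 20, 2, 16, 5, 11, 12, 8, 18], [0, 9, 15, 11, 7, 16, 13, 10, 3, 1, 
  19, 8, 6, 2, 4, 18, 14, 12, 20, 17, 5], [1, 10, 16, 9, 8, 17, 14, 11, 4, 2, 20, 6, 7, 0, 5, 19, 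
  12, 13, 18, 15, 3], [2, 11, 17, 10, 6, 15, 12, 9, 5, 0, 18, 7, 8, 1, 3, 20, 13, 14, 19, 16, 4]]

def k6T : List (List ℕ) :=
  [[0, 5, 14, 1, 9, 13, 2, 12, 15, 3, 11, 20, 4, 6, 19, 7, 17, 18, 8, 10, 16], [1, 3, 12, 2, 10, 
  14, 0, 13, 16, 4, 9, 18, 5, 7, 20, 8, 15, 19, 6, 11, 17], [2, 4, 13, 0, 11, 12, 1, 14, 17, 5, 
  10, 19, 3, 8, 18, 6, 16, 20, 7, 9, 15], [0, 9, 17, 1, 5, 11, 2, 8, 20, 3, 4, 14, 6, 13, 15, 7, 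
  10, 12, 16, 18, 19], [1, 10, 15, 2, 3, 9, 0, 6, 18, 4, 5, 12, 7, 14, 16, 8, 11, 13, 17, 19, 
  20], [2, 11, 16, 0, 4, 10, 1, 7, 19, 5, 3, 13, 8, 12, 17, 6, 9, 14, 15, 20, 18]]

def k6S : List (List ℕ) :=
  [[0, 8, 5, 16, 12, 9, 20, 1, 6, 3, 17, 13, 10, 18, 2, 7, 4, 15, 14, 11, 19], [0, 1, 4, 20, 10, 
  11, 15, 9, 5, 17, 16, 3, 7, 8, 6, 12, 13, 19, 14, 18, 2], [1, 2, 5, 18, 11, 9, 16, 10, 3, 15, 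
  17, 4, 8, 6, 7, 13, 14, 20, 12, 19, 0], [2, 0, 3, 19, 9, 10, 17, 11, 4, 16, 15, 5, 6, 7, 8, 14, 
  12, 18, 13, 20, 1]]

def k7T : List (List ℕ) :=
  [[0, 16, 20, 1, 17, 18, 2, 15, 19, 3, 8, 14, 4, 6, 12, 5, 7, 13, 9, 10, 11], [0, 3, 5, 1, 6, 
  14, 2, 10, 18, 4, 13, 19, 7, 16, 17, 8, 11, 20, 9, 12, 15], [1, 4, 3, 2, 7, 12, 0, 11, 19, 5, 
  14, 20, 8, 17, 15, 6, 9, 18, 10, 13, 16], [2, 5, 4, 0, 8, 13, 1, 9, 20, 3, 12, 18, 6, 15, 16, 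
  7, 10, 19, 11, 14, 17], [0, 1, 12, 2, 9, 16, 3, 17, 20, 4, 7, 11, 5, 10, 15, 6, 8, 19, 13, 14, 
  18], [1, 2, 13, 0, 10, 17, 4, 15, 18, 5, 8, 9, 3, 11, 16, 7, 6, 20, 14, 12, 19], [2, 0, 14, 1, 
  11, 15, 5, 16, 19, 3, 6, 10, 4, 9, 17, 8, 7, 18, 12, 13, 20]]

def k7S : List (List ℕ) :=
  [[0, 9, 7, 1, 8, 16, 4, 17, 2, 20, 15, 14, 10, 12, 11, 18, 19, 3, 13, 6, 5], [1, 10, 8, 2, 6, 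
  17, 5, 15, 0, 18, 16, 12, 11, 13, 9, 19, 20, 4, 14, 7, 3], [2, 11, 6, 0, 7, 15, 3, 16, 1, 19, 
  17, 13, 9, 14, 10, 20, 18, 5, 12, 8, 4]]

def k8T : List (List ℕ) :=
  [[0, 1, 2, 3, 4, 5, 6, 12, 19, 7, 13, 20, 8, 14, 18, 9, 10, 11, 15, 16, 17], [0, 5, 10, 1, 3, 
  11, 2, 4, 9, 6, 7, 8, 12, 15, 18, 13, 16, 19, 14, 17, 20], [0, 16, 18, 1, 8, 15, 2, 3, 13, 4, 
  10, 17, 5, 6, 20, 7, 9, 19, 11, 12, 14], [1, 17, 19, 2, 6, 16, 0, 4, 14, 5, 11, 15, 3, 7, 18, 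
  8, 10, 20, 9, 13, 12], [2, 15, 20, 0, 7, 17, 1, 5, 12, 3, 9, 16, 4, 8, 19, 6, 11, 18, 10, 14, 
  13], [0, 3, 12, 1, 9, 14, 2, 8, 11, 4, 18, 20, 5, 7, 16, 6, 13, 17, 10, 15, 19], [1, 4, 13, 2, 
  10, 12, 0, 6, 9, 5, 19, 18, 3, 8, 17, 7, 14, 15, 11, 16, 20], [2, 5, 14, 0, 11, 13, 1, 7, 10, 
  3, 20, 19, 4, 6, 15, 8, 12, 16, 9, 17, 18]]

def k8S : List (List ℕ) :=
  [[0, 20, 9, 5, 8, 13, 15, 1, 18, 10, 3, 6, 14, 16, 2, 19, 11, 4, 7, 12, 17], [0, 19, 14, 3, 15, 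
  9, 8, 1, 20, 12, 4, 16, 10, 6, 2, 18, 13, 5, 17, 11, 7]]

def k9T : List (List ℕ) :=
  [[0, 15, 18, 1, 7, 14, 2, 3, 16, 4, 9, 10, 5, 13, 17, 6, 8, 20, 11, 12, 19], [1, 16, 19, 2, 8, 
  12, 0, 4, 17, 5, 10, 11, 3, 14, 15, 7, 6, 18, 9, 13, 20], [2, 17, 20, 0, 6, 13, 1, 5, 15, 3, 
  11, 9, 4, 12, 16, 8, 7, 19, 10, 14, 18], [0, 9, 16, 1, 3, 8, 2, 7, 10, 4, 15, 20, 5, 6, 12, 11, 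
  17, 18, 13, 14, 19], [1, 10, 17, 2, 4, 6, 0, 8, 11, 5, 16, 18, 3, 7, 13, 9, 15, 19, 14, 12, 
  20], [2, 11, 15, 0, 5, 7, 1, 6, 9, 3, 17, 19, 4, 8, 14, 10, 16, 20, 12, 13, 18], [0, 1, 12, 2, 
  18, 19, 3, 5, 20, 4, 7, 11, 6, 15, 16, 8, 10, 13, 9, 14, 17], [1, 2, 13, 0, 19, 20, 4, 3, 18, 
  5, 8, 9, 7, 16, 17, 6, 11, 14, 10, 12, 15], [2, 0, 14, 1, 20, 18, 5, 4, 19, 3, 6, 10, 8, 17, 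
  15, 7, 9, 12, 11, 13, 16]]

def k9S : List (List ℕ) :=
  [[0, 10, 19, 6, 17, 12, 3, 1, 11, 20, 7, 15, 13, 4, 2, 9, 18, 8, 16, 14, 5]]

def k10T : List (List ℕ) :=
  [[0, 8, 15, 1, 6, 16, 2, 7, 17, 3, 9, 12, 4, 10, 13, 5, 11, 14, 18, 19, 20], [0, 10, 12, 1, 8, 
  14, 2, 5, 15, 3, 6, 18, 4, 9, 20, 7, 11, 16, 13, 17, 19], [1, 11, 13, 2, 6, 12, 0, 3, 16, 4, 7, 
  19, 5, 10, 18, 8, 9, 17, 14, 15, 20], [2, 9, 14, 0, 7, 13, 1, 4, 17, 5, 8, 20, 3, 11, 19, 6, 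
  10, 15, 12, 16, 18], [0, 1, 9, 2, 3, 8, 4, 5, 12, 6, 7, 20, 10, 14, 19, 11, 17, 18, 13, 15, 
  16], [1, 2, 10, 0, 4, 6, 5, 3, 13, 7, 8, 18, 11, 12, 20, 9, 15, 19, 14, 16, 17], [2, 0, 11, 1, 
  5, 7, 3, 4, 14, 8, 6, 19, 9, 13, 18, 10, 16, 20, 12, 17, 15], [0, 5, 19, 1, 15, 18, 2, 13, 20, 
  3, 10, 17, 4, 8, 16, 6, 9, 11, 7, 12, 14], [1, 3, 20, 2, 16, 19, 0, 14, 18, 4, 11, 15, 5, 6, 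
  17, 7, 10, 9, 8, 13, 12], [2, 4, 18, 0, 17, 20, 1, 12, 19, 5, 9, 16, 3, 7, 15, 8, 11, 10, 6, 
  14, 13]]

def k10S : List (List ℕ) :=
  []

def nth : List ℕ → ℕ → ℕ
  | [], _ => 0
  | a :: _, 0 => a
  | _ :: l, n + 1 => nth l n

def nthL : List (List ℕ) → ℕ → List ℕ
  | [], _ => []
  | a :: _, 0 => a
  | _ :: l, n + 1 => nthL l n

def D2 (t : ℕ) : Bool := [0, 2, 5, 7, 14, 16, 19].any fun x => Nat.beq x t

/-- Weights of the pairs of levels. -/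
def cc (a b : ℕ) : ℕ := cond (D2 ((b + 21 - a) % 21)) 2 1

def Wall (a b : ℕ) : List ℕ := [cc a b]
def Win (a b : ℕ) : List ℕ := cond (Nat.beq (a % 3) (b % 3)) [cc a b] []
def Wx (a b : ℕ) : List ℕ := cond (Nat.beq (a % 3) (b % 3)) [] [cc a b]
def Wcol (a b : ℕ) : List ℕ := cond (Nat.beq a b) [] [0]
def Wxc (a b : ℕ) : List ℕ := Wx a b ++ Wcol a b
def Wcx (a b : ℕ) : List ℕ := cond (Nat.beq (a % 3) (b % 3)) [] [0]
def Wcin (a b : ℕ) : List ℕ := cond (Nat.beq a b) [] (cond (Nat.beq (a % 3) (b % 3)) [0] [])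

def wB (i p : ℕ) : ℕ := nth (nthL wDat i) (p % 7) + p / 7
def zB (i p : ℕ) : ℕ :=
  cond (Nat.beq (p % 3) 0) (nth (nthL zDat i) (p / 3))
    (cond (Nat.beq (p % 3) 1) (21 + (nth (nthL zDat i) (p / 3) + nth zq (p / 3)) % 21)
      (42 + (nth (nthL zDat i) (p / 3) + nth zp (p / 3)) % 21))
def triB (T : List ℕ) (p : ℕ) : ℕ := nth T (p % 3) / 21 * 21 + (nth T (p % 3) % 21 + 3 * (p / 3)) % 21
def negB (T : List ℕ) (p : ℕ) : ℕ := (8 - nth T p / 21) * 21 + nth T p % 21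
def flatB (T : List ℕ) (p : ℕ) : ℕ := nth T p % 21
def inB (d p : ℕ) : ℕ := (p / 7 + d * (p % 7)) % 21

theorem ckW : chkS Win 7 3 wB = true := chkS_of (by decide +kernel)
theorem ckZ : chkS Wall 3 1 zB = true := chkS_of (by decide +kernel)
theorem ckT0 : chkC Wx [] [nth t0Dat, negB t0Dat] 21 3 = true := chkC_of (by decide +kernel)
theorem ckT7 : chkC Wx (t7Tri.map triB) [nth t7Dat] 21 3 = true := chkC_of (by decide +kernel)
theorem ckB4 : chkC Wxc (b4Tri.map triB) (b4Dat.map nth) 21 21 = true := chkC_of (by decide +kernel)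
theorem ckB5 : chkC Wxc (b5Tri.map triB) (b5Dat.map nth) 21 21 = true := chkC_of (by decide +kernel)
theorem ckB6 : chkC Wxc (b6Tri.map triB) (b6Dat.map nth) 21 21 = true := chkC_of (by decide +kernel)
theorem ckK0x : chkC Wcx [] [flatB t0Dat] 21 3 = true := chkC_of (by decide +kernel)
theorem ckK0i : chkC Wcin [] ([3, 6, 9].map inB) 21 21 = true := chkC_of (by decide +kernel)
theorem ckK1 : chkC Wcol (k1T.map nth) (k1S.map nth) 21 21 = true := chkC_of (by decide +kernel)
theorem ckK2 : chkC Wcol (k2T.map nth) (k2S.map nth) 21 21 = true := chkC_of (by decide +kernel)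
theorem ckK3 : chkC Wcol (k3T.map nth) (k3S.map nth) 21 21 = true := chkC_of (by decide +kernel)
theorem ckK4 : chkC Wcol (k4T.map nth) (k4S.map nth) 21 21 = true := chkC_of (by decide +kernel)
theorem ckK5 : chkC Wcol (k5T.map nth) (k5S.map nth) 21 21 = true := chkC_of (by decide +kernel)
theorem ckK6 : chkC Wcol (k6T.map nth) (k6S.map nth) 21 21 = true := chkC_of (by decide +kernel)
theorem ckK7 : chkC Wcol (k7T.map nth) (k7S.map nth) 21 21 = true := chkC_of (by decide +kernel)
theorem ckK8 : chkC Wcol (k8T.map nth) (k8S.map nth) 21 21 = true := chkC_of (by decide +kernel)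
theorem ckK9 : chkC Wcol (k9T.map nth) (k9S.map nth) 21 21 = true := chkC_of (by decide +kernel)
theorem ckK10 : chkC Wcol (k10T.map nth) (k10S.map nth) 21 21 = true := chkC_of (by decide +kernel)

def Col {m : ℕ} (u v : VV m) : Prop := u.1 = v.1 ∧ u.2 ≠ v.2

theorem ew_split {m : ℕ} {d : ZMod m} {u v : VV m} (h : EW Wall d u v) : EW Win d u v ∨ EW Wx d u v := by
  obtain ⟨w, hw, he⟩ := h
  unfold Wall at hw
  unfold EW Win Wx
  cases hb : Nat.beq (u.2.val % 3) (v.2.val % 3)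
  · right; exact ⟨w, by simpa using hw, he⟩
  · left; exact ⟨w, by simpa using hw, he⟩

theorem beq_lev {m : ℕ} {u v : VV m} (h : Col u v) : Nat.beq u.2.val v.2.val = false := by
  rw [Bool.eq_false_iff]
  intro hb
  rw [Nat.beq_eq] at hb
  exact h.2 (Fin.ext hb)

theorem col_ew {m : ℕ} (d : ZMod m) {u v : VV m} (h : Col u v) : EW Wcol d u v := by
  refine ⟨0, ?_, by simp [h.1]⟩
  unfold Wcol
  rw [beq_lev h]
  simp

theorem col_split {m : ℕ} (d : ZMod m) {u v : VV m} (h : Col u v) : EW Wcx d u v ∨ EW Wcin d u v := by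
  cases hb : Nat.beq (u.2.val % 3) (v.2.val % 3)
  · left
    refine ⟨0, ?_, by simp [h.1]⟩
    unfold Wcx
    rw [hb]
    simp
  · right
    refine ⟨0, ?_, by simp [h.1]⟩
    unfold Wcin
    rw [beq_lev h, hb]
    simp

theorem Cov.mono {m : ℕ} {E E' : VV m → VV m → Prop} {r s : ℕ} (h : Cov E r s) (hE : ∀ u v, E' u v → E u v) :
    Cov E' r s := by
  obtain ⟨a, b, h1, h2, h3, h4, h5⟩ := h
  exact ⟨a, b, h1, h2, h3, h4, fun u v huv => h5 u v (hE u v huv)⟩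

section
variable {m : ℕ} [NeZero m]

theorem covCol (r : ℕ) (hr : r ≤ 10) : Cov (Col (m := m)) r (10 - r) := by
  interval_cases r
  · exact ((constPiece (m := m) 0 _ _ _ 21 3 1 7 rfl rfl ckK0x).add
      (constPiece (m := m) 0 _ _ _ 21 21 1 1 rfl rfl ckK0i) (fun u v h => col_split 0 h))
  · exact (constPiece (m := m) 0 _ _ _ 21 21 1 1 rfl rfl ckK1).mono (fun u v h => col_ew 0 h)
  · exact (constPiece (m := m) 0 _ _ _ 21 21 1 1 rfl rfl ckK2).mono (fun u v h => col_ew 0 h)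
  · exact (constPiece (m := m) 0 _ _ _ 21 21 1 1 rfl rfl ckK3).mono (fun u v h => col_ew 0 h)
  · exact (constPiece (m := m) 0 _ _ _ 21 21 1 1 rfl rfl ckK4).mono (fun u v h => col_ew 0 h)
  · exact (constPiece (m := m) 0 _ _ _ 21 21 1 1 rfl rfl ckK5).mono (fun u v h => col_ew 0 h)
  · exact (constPiece (m := m) 0 _ _ _ 21 21 1 1 rfl rfl ckK6).mono (fun u v h => col_ew 0 h)
  · exact (constPiece (m := m) 0 _ _ _ 21 21 1 1 rfl rfl ckK7).mono (fun u v h => col_ew 0 h)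
  · exact (constPiece (m := m) 0 _ _ _ 21 21 1 1 rfl rfl ckK8).mono (fun u v h => col_ew 0 h)
  · exact (constPiece (m := m) 0 _ _ _ 21 21 1 1 rfl rfl ckK9).mono (fun u v h => col_ew 0 h)
  · exact (constPiece (m := m) 0 _ _ _ 21 21 1 1 rfl rfl ckK10).mono (fun u v h => col_ew 0 h)

theorem cov21 (hm : m % 2 = 1) (d : ZMod m) (hd : d ≠ 0) : Cov (EW Wall d) 21 0 := by
  obtain ⟨L, h1, h2, h3⟩ := walkPiece hm d hd Wall 3 7 1 21 (by norm_num) rfl rfl zB ckZ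
  exact ⟨L, [], h1, rfl, h2, by simp, by simpa using h3⟩

theorem covIn (hm : m % 2 = 1) (d : ZMod m) (hd : d ≠ 0) : Cov (EW Win d) 0 7 := by
  obtain ⟨L, h1, h2, h3⟩ := walkPiece hm d hd Win 7 3 3 7 (by norm_num) rfl rfl wB ckW
  exact ⟨[], L, rfl, h1, by simp, h2, by simpa using h3⟩

theorem cov0 (hm : m % 2 = 1) (d : ZMod m) (hd : d ≠ 0) : Cov (EW Wall d) 0 21 :=
  (covIn hm d hd).add (constPiece d _ _ _ 21 3 1 7 rfl rfl ckT0) (fun _ _ h => ew_split h)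

theorem cov7 (hm : m % 2 = 1) (d : ZMod m) (hd : d ≠ 0) : Cov (EW Wall d) 7 14 :=
  (covIn hm d hd).add (constPiece d _ _ _ 21 3 1 7 rfl rfl ckT7) (fun _ _ h => ew_split h)

theorem ew_splitB {d : ZMod m} {u v : VV m} (h : EW Wall d u v ∨ Col u v) :
    EW Win d u v ∨ EW Wxc d u v := by
  rcases h with h | h
  · rcases ew_split h with h | ⟨w, hw, he⟩
    · exact Or.inl h
    · exact Or.inr ⟨w, List.mem_append.2 (Or.inl hw), he⟩
  · obtain ⟨w, hw, he⟩ := col_ew d h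
    exact Or.inr ⟨w, List.mem_append.2 (Or.inr hw), he⟩

theorem covB (hm : m % 2 = 1) (d : ZMod m) (hd : d ≠ 0) (r : ℕ) (h1 : 18 ≤ r) (h2 : r ≤ 20) :
    Cov (fun u v => EW Wall d u v ∨ Col u v) r (31 - r) := by
  interval_cases r
  · exact (covIn hm d hd).add (constPiece d _ _ _ 21 21 1 1 rfl rfl ckB6) (fun _ _ h => ew_splitB h)
  · exact (covIn hm d hd).add (constPiece d _ _ _ 21 21 1 1 rfl rfl ckB5) (fun _ _ h => ew_splitB h)
  · exact (covIn hm d hd).add (constPiece d _ _ _ 21 21 1 1 rfl rfl ckB4) (fun _ _ h => ew_splitB h)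

/-- Edges for differences in a range. -/
def Rng (a b : ℕ) (u v : VV m) : Prop :=
  ∃ i, a ≤ i ∧ i < b ∧ EW Wall (((i + 1 : ℕ) : ZMod m)) u v

theorem covRng (x y : ℕ) (hp : ∀ i, 2 * i + 2 < m → Cov (EW Wall (((i + 1 : ℕ) : ZMod m))) x y)
    (a l : ℕ) (h : 2 * (a + l) < m) : Cov (Rng (m := m) a (a + l)) (x * l) (y * l) := by
  induction l with
  | zero =>
    refine ⟨[], [], rfl, rfl, by simp, by simp, ?_⟩
    rintro u v ⟨i, h1, h2, _⟩
    omega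
  | succ l ih =>
    refine (ih (by omega)).add (hp (a + l) (by omega)) ?_
    rintro u v ⟨i, h1, h2, h3⟩
    by_cases hi : i = a + l
    · right; rw [← hi]; exact h3
    · left; exact ⟨i, h1, by omega, h3⟩

theorem dne (i : ℕ) (h : 2 * i + 2 < m) : (((i + 1 : ℕ) : ZMod m)) ≠ 0 := by
  rw [Ne, ZMod.natCast_eq_zero_iff]
  intro hd
  have := Nat.le_of_dvd (by omega) hd
  omega

theorem covFull (h : ℕ) (hm : m = 2 * h + 1) (r s : ℕ) (hs : 0 < s) (hrs : r + s = 21 * h + 10) :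
    Cov (fun u v : VV m => Col u v ∨ Rng 0 h u v) r s := by
  have hm2 : m % 2 = 1 := by omega
  have c21 : ∀ a l, a + l ≤ h → Cov (Rng (m := m) a (a + l)) (21 * l) (0 * l) := fun a l hl =>
    covRng 21 0 (fun i hi => cov21 hm2 _ (dne i hi)) a l (by omega)
  have c0 : ∀ a l, a + l ≤ h → Cov (Rng (m := m) a (a + l)) (0 * l) (21 * l) := fun a l hl =>
    covRng 0 21 (fun i hi => cov0 hm2 _ (dne i hi)) a l (by omega)
  have cmix : ∀ q t, q + t ≤ h → Cov (Rng (m := m) 0 (q + t)) (21 * q) (21 * t) := by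
    intro q t hl
    have h1 := (c21 0 q (by omega)).add (c0 q t hl) (E'' := Rng 0 (q + t)) (by
      rintro u v ⟨i, h1, h2, h3⟩
      by_cases hi : i < q
      · left; exact ⟨i, h1, by omega, h3⟩
      · right; exact ⟨i, by omega, h2, h3⟩)
    convert h1 using 1 <;> ring
  obtain ⟨q, ρ, hr, hρ⟩ : ∃ q ρ, r = 21 * q + ρ ∧ ρ < 21 :=
    ⟨r / 21, r % 21, (Nat.div_add_mod r 21).symm, Nat.mod_lt _ (by norm_num)⟩
  by_cases h10 : ρ ≤ 10
  · obtain ⟨t, rfl⟩ : ∃ t, h = q + t := ⟨h - q, by omega⟩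
    have h1 := (covCol (m := m) ρ h10).add (cmix q t le_rfl) (E'' := fun u v => Col u v ∨ Rng 0 (q + t) u v)
      (fun u v h => h)
    convert h1 using 1 <;> omega
  · obtain ⟨t, rfl⟩ : ∃ t, h = q + t + 1 := ⟨h - q - 1, by omega⟩
    have hsp : ∀ u v : VV m, Rng 0 (q + t + 1) u v → Rng 0 (q + t) u v ∨ EW Wall (((q + t + 1 : ℕ) : ZMod m)) u v := by
      rintro u v ⟨i, h1, h2, h3⟩
      by_cases hi : i = q + t
      · right; rw [← hi]; exact h3
      · left; exact ⟨i, h1, by omega, h3⟩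
    have hd := dne (m := m) (q + t) (by omega)
    by_cases h17 : ρ ≤ 17
    · have h1 := ((covCol (m := m) (ρ - 7) (by omega)).add (cov7 hm2 _ hd)
        (E'' := fun u v => Col u v ∨ EW Wall (((q + t + 1 : ℕ) : ZMod m)) u v) (fun u v h => h)).add
        (cmix q t (by omega)) (E'' := fun u v => Col u v ∨ Rng 0 (q + t + 1) u v) (by
          intro u v h
          rcases h with h | h
          · exact Or.inl (Or.inl h)
          · rcases hsp u v h with h | h
            · exact Or.inr h
            · exact Or.inl (Or.inr h))
      convert h1 using 1 <;> omega
    · have h1 := (covB hm2 _ hd ρ (by omega) (by omega)).add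
        (cmix q t (by omega)) (E'' := fun u v => Col u v ∨ Rng 0 (q + t + 1) u v) (by
          intro u v h
          rcases h with h | h
          · exact Or.inl (Or.inr h)
          · rcases hsp u v h with h | h
            · exact Or.inr h
            · exact Or.inl (Or.inl h))
      convert h1 using 1 <;> omega

theorem cc_symm : ∀ a b : Fin 21, cc a.val b.val = cc b.val a.val := by decide +kernel

theorem cc_cases (a b : ℕ) : cc a b = 1 ∨ cc a b = 2 := by
  unfold cc
  cases D2 ((b + 21 - a) % 21) <;> simp

theorem all_covered (h : ℕ) (hm : m = 2 * h + 1) (u v : VV m) (huv : u ≠ v) :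
    (Col u v ∨ Rng 0 h u v) ∨ (Col v u ∨ Rng 0 h v u) := by
  by_cases hc : u.1 = v.1
  · left; left
    refine ⟨hc, fun h => huv (Prod.ext hc h)⟩
  obtain ⟨ε, hε⟩ : ∃ ε : ZMod m, ((cc u.2.val v.2.val : ℕ) : ZMod m) * ε = v.1 - u.1 := by
    rcases cc_cases u.2.val v.2.val with h1 | h1
    · exact ⟨v.1 - u.1, by rw [h1]; simp⟩
    · refine ⟨((h + 1 : ℕ) : ZMod m) * (v.1 - u.1), ?_⟩
      rw [h1, ← mul_assoc, ← Nat.cast_mul]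
      have : 2 * (h + 1) = m + 1 := by omega
      rw [this]
      simp
  have hε0 : ε ≠ 0 := by
    rintro rfl
    rw [mul_zero] at hε
    exact hc (sub_eq_zero.1 hε.symm).symm
  have hv : ((ε.val : ℕ) : ZMod m) = ε := ZMod.natCast_zmod_val ε
  have hlt := ZMod.val_lt ε
  have hpos : 0 < ε.val := by
    rcases Nat.eq_zero_or_pos ε.val with h | h
    · exact absurd ((ZMod.val_eq_zero ε).1 h) hε0
    · exact h
  by_cases hle : ε.val ≤ h
  · left; right
    refine ⟨ε.val - 1, by omega, by omega, cc u.2.val v.2.val, by simp [Wall], ?_⟩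
    rw [Nat.sub_add_cancel hpos, hv, hε]
    ring
  · right; right
    refine ⟨m - ε.val - 1, by omega, by omega, cc v.2.val u.2.val, by simp [Wall], ?_⟩
    rw [Nat.sub_add_cancel (by omega), Nat.cast_sub hlt.le, hv, cc_symm v.2 u.2]
    have : ((m : ℕ) : ZMod m) - ε = -ε := by simp
    rw [this, mul_neg, hε]
    ring

end

theorem main_suff (h r s : ℕ) (hs : 0 < s) (hrs : r + s = 21 * h + 10) :
    IsCycleDecomp (⊤ : SimpleGraph (Fin (42 * h + 21))) 3 7 r s := by
  haveI : NeZero (2 * h + 1) := ⟨by omega⟩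
  obtain ⟨l3, l7, h1, h2, h3, h4, h5⟩ := covFull (m := 2 * h + 1) h rfl r s hs hrs
  subst h1 h2
  have hcard : Fintype.card (Fin (42 * h + 21)) = Fintype.card (VV (2 * h + 1)) := by
    rw [Fintype.card_prod, ZMod.card, Fintype.card_fin, Fintype.card_fin]
    ring
  refine decomp_of_cover (Fintype.equivOfCardEq hcard) l3 l7 h3 h4 ?_ ?_
  · intro u v huv
    rcases all_covered (m := 2 * h + 1) h rfl u v huv with hh | hh
    · exact h5 u v hh
    · obtain ⟨F, hF, hA⟩ := h5 v u hh
      exact ⟨F, hF, hA.symm⟩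
  · rw [Fintype.card_fin]
    omega

/-- Theorem 1.3 (main theorem): let `n ≡ 1 (mod 2)` and let `r, s` be nonnegative integers
with `rs ≠ 0` and `r + s = (n-1)/2`.  Then an `HW(n; r, s; 3, 7)` exists if and only if
`n ≡ 21 (mod 42)`, except possibly when `n = 21` and `r ∈ {2, 4, 6}`: if an
`HW(n; r, s; 3, 7)` exists then `n ≡ 21 (mod 42)`, and conversely if `n ≡ 21 (mod 42)` and
either `n > 21` or (`n = 21` and `r ∉ {2, 4, 6}`), then an `HW(n; r, s; 3, 7)` exists. -/
theorem HW_main (n r s : ℕ) (hn : n % 2 = 1) (hrs0 : r * s ≠ 0)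
    (hrs : r + s = (n - 1) / 2) :
    (IsCycleDecomp (⊤ : SimpleGraph (Fin n)) 3 7 r s → n % 42 = 21) ∧
    (n % 42 = 21 → (21 < n ∨ (n = 21 ∧ r ∉ ({2, 4, 6} : Set ℕ))) →
      IsCycleDecomp (⊤ : SimpleGraph (Fin n)) 3 7 r s) := by
  have hr0 : 0 < r := by
    rcases Nat.eq_zero_or_pos r with h | h
    · subst h; simp at hrs0
    · exact h
  have hs0 : 0 < s := by
    rcases Nat.eq_zero_or_pos s with h | h
    · subst h; simp at hrs0
    · exact h
  constructor
  · rintro ⟨F, _, _, h3, h7⟩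
    have d3 := factor_dvd (h3 ⟨0, hr0⟩)
    have d7 := factor_dvd (h7 ⟨0, hs0⟩)
    omega
  · intro hn42 _
    obtain ⟨h, rfl⟩ : ∃ h, n = 42 * h + 21 := ⟨n / 42, by omega⟩
    exact main_suff h r s hs0 (by omega)
end

section
/- For every n ≡ 21 (mod 42) with n > 21 and all positive integers r, s with r + s = (n−1)/2, there exists an HW(n; r, s; 3, 7), i.e., a decomposition of K_n into r C₃-factors and s C₇-factors. -/
open SimpleGraph

namespace HWP

/-- A decomposition of the graph `G` into partial cycle factors, given by permutations. -/
structure Dec {X I : Type} (G : X → X → Prop) (hole : I → X → Prop) (k : I → ℕ)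
    (σ : I → X → X) : Prop where
  cyc : ∀ i x, (σ i)^[k i] x = x
  fix : ∀ i x, σ i x = x ↔ hole i x
  adj : ∀ i x, ¬ hole i x → G x (σ i x)
  ex : ∀ x y, x ≠ y → G x y → ∃ i, σ i x = y ∨ σ i y = x
  uniq : ∀ x y i j, x ≠ y → (σ i x = y ∨ σ i y = x) → (σ j x = y ∨ σ j y = x) → i = j

theorem Dec.transport {X I X' I' : Type} {G : X → X → Prop} {hole : I → X → Prop} {k : I → ℕ}
    {σ : I → X → X} (h : Dec G hole k σ) (e : X' ≃ X) (f : I' ≃ I) :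
    Dec (fun x y => G (e x) (e y)) (fun i x => hole (f i) (e x)) (fun i => k (f i))
      (fun i x => e.symm (σ (f i) (e x))) where
  cyc i x := by
    have : ∀ m x, (fun x => e.symm (σ (f i) (e x)))^[m] x = e.symm ((σ (f i))^[m] (e x)) := by
      intro m
      induction m with
      | zero => intro x; simp
      | succ m ih => intro x; simp [Function.iterate_succ_apply, ih]
    rw [this, h.cyc]; simp
  fix i x := by rw [← h.fix, Equiv.symm_apply_eq]
  adj i x hx := by simpa using h.adj _ _ hx
  ex x y hxy hG := by
    obtain ⟨i, hi⟩ := h.ex (e x) (e y) (by simpa using hxy) hG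
    refine ⟨f.symm i, ?_⟩
    simpa [Equiv.symm_apply_eq] using hi
  uniq x y i j hxy h1 h2 := by
    apply f.injective
    apply h.uniq (e x) (e y) _ _ (by simpa using hxy)
    · simpa [Equiv.symm_apply_eq] using h1
    · simpa [Equiv.symm_apply_eq] using h2

theorem Dec.congr {X I : Type} {G G' : X → X → Prop} {hole hole' : I → X → Prop} {k k' : I → ℕ}
    {σ : I → X → X} (h : Dec G hole k σ) (h1 : ∀ x y, G x y ↔ G' x y)
    (h2 : ∀ i x, hole i x ↔ hole' i x) (h3 : ∀ i, k i = k' i) : Dec G' hole' k' σ := by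
  have e1 : G = G' := by funext x y; exact propext (h1 x y)
  have e2 : hole = hole' := by funext x y; exact propext (h2 x y)
  have e3 : k = k' := by funext x; exact h3 x
  subst e1 e2 e3; exact h

/-- insert elements one by one in a bit mask, checking that they are new -/
def chk : List ℕ → ℕ → ℕ → Bool
  | [], acc, full => acc == full
  | y :: l, acc, full => !(acc.testBit y) && chk l (acc ||| 1 <<< y) full

theorem chk_spec (l : List ℕ) : ∀ acc full, chk l acc full = true →
    (∀ z, full.testBit z = true ↔ (acc.testBit z = true ∨ z ∈ l)) ∧ l.Nodup ∧
      ∀ z ∈ l, acc.testBit z = false := by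
  induction l with
  | nil => intro acc full h; simp [chk] at h; subst h; simp
  | cons y l ih =>
    intro acc full h
    simp only [chk, Bool.and_eq_true, Bool.not_eq_true'] at h
    obtain ⟨h1, h2⟩ := h
    obtain ⟨a, b, c⟩ := ih _ _ h2
    have hb : ∀ z, (acc ||| 1 <<< y).testBit z = true ↔ (acc.testBit z = true ∨ z = y) := by
      intro z
      rw [Nat.testBit_or, Bool.or_eq_true, Nat.one_shiftLeft, Nat.testBit_two_pow, decide_eq_true_eq,
        @eq_comm _ y]
    refine ⟨?_, ?_, ?_⟩
    · intro z
      rw [a, hb, List.mem_cons, or_assoc]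
    · rw [List.nodup_cons]
      refine ⟨fun hy => ?_, b⟩
      have := c y hy
      have h3 := (hb y).2 (Or.inr rfl)
      simp_all
    · intro z hz
      rcases List.mem_cons.1 hz with rfl | hz
      · exact h1
      · have := c z hz
        by_contra h4
        have h5 := (hb z).2 (Or.inl (by simpa using h4))
        simp_all

def mask (N : ℕ) (p : ℕ → Bool) : ℕ :=
  (List.range N).foldl (fun acc y => if p y then acc ||| 1 <<< y else acc) 0

theorem mask_spec (N : ℕ) (p : ℕ → Bool) (z : ℕ) :
    (mask N p).testBit z = true ↔ z < N ∧ p z = true := by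
  induction N with
  | zero => simp [mask]
  | succ N ih =>
    rw [mask, List.range_succ, List.foldl_append]
    change (if p N then mask N p ||| 1 <<< N else mask N p).testBit z = true ↔ _
    split_ifs with h
    · rw [Nat.testBit_or, Bool.or_eq_true, ih, Nat.one_shiftLeft, Nat.testBit_two_pow]
      simp only [decide_eq_true_eq]
      constructor
      · rintro (h1 | rfl)
        · exact ⟨by omega, h1.2⟩
        · exact ⟨by omega, h⟩
      · rintro ⟨h1, h2⟩
        by_cases h3 : N = z
        · exact Or.inr h3
        · exact Or.inl ⟨by omega, h2⟩
    · rw [ih]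
      constructor
      · rintro ⟨h1, h2⟩; exact ⟨by omega, h2⟩
      · rintro ⟨h1, h2⟩
        refine ⟨?_, h2⟩
        by_contra h3
        have : z = N := by omega
        subst this; exact h h2

def itr (f : ℕ → ℕ) : ℕ → ℕ → ℕ
  | 0, x => x
  | m + 1, x => f (itr f m x)

theorem itr_eq (f : ℕ → ℕ) (m x : ℕ) : itr f m x = f^[m] x := by
  induction m with
  | zero => rfl
  | succ m ih => rw [itr, ih, Function.iterate_succ_apply']

/-- the kernel-friendly check -/
def good (N M : ℕ) (G : ℕ → ℕ → Bool) (hole : ℕ → ℕ → Bool) (k : ℕ → ℕ) (f : ℕ → ℕ → ℕ) : Bool :=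
  ((List.range M).all fun c => (List.range N).all fun x =>
    Nat.blt (f c x) N && (itr (f c) (k c) x == x) && ((f c x == x) == hole c x)
      && (hole c x || G x (f c x)) && Nat.ble 1 (k c)) &&
  ((List.range N).all fun x =>
    chk ((List.range M).flatMap fun c =>
      if hole c x then [] else [f c x, itr (f c) (k c - 1) x]) 0
      (mask N fun y => G x y))

theorem dec_of_good {N M : ℕ} {G : ℕ → ℕ → Bool} {hole : ℕ → ℕ → Bool} {k : ℕ → ℕ}
    {f : ℕ → ℕ → ℕ} (h : good N M G hole k f = true) :
    ∃ σ : Fin M → Fin N → Fin N,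
      Dec (fun x y : Fin N => G x y = true) (fun (i : Fin M) (x : Fin N) => hole i x = true)
        (fun i : Fin M => k i) σ := by
  simp only [good, Bool.and_eq_true, List.all_eq_true, List.mem_range, beq_iff_eq,
    Bool.or_eq_true, Nat.blt_eq, Nat.ble_eq] at h
  obtain ⟨h1, h2⟩ := h
  let σ : Fin M → Fin N → Fin N := fun c x => ⟨f c x, (h1 c c.2 x x.2).1.1.1.1⟩
  have hit : ∀ c m (x : Fin N), (((σ c)^[m] x : Fin N) : ℕ) = (f c)^[m] x := by
    intro c m
    induction m with
    | zero => intro x; rfl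
    | succ m ih => intro x; rw [Function.iterate_succ_apply, Function.iterate_succ_apply, ih]
  have hcyc : ∀ i x, (σ i)^[k i] x = x := by
    intro i x
    apply Fin.ext
    rw [hit, ← itr_eq]; exact (h1 i i.2 x x.2).1.1.1.2
  have hfix : ∀ i x, σ i x = x ↔ hole i x = true := by
    intro i x
    have := (h1 i i.2 x x.2).1.1.2
    rw [Fin.ext_iff, ← this]; simp [σ]
  have key : ∀ (i : Fin M) (x y : Fin N), x ≠ y → (σ i x = y ∨ σ i y = x) →
      (y : ℕ) ∈ (if hole i x then [] else [f i x, itr (f i) (k i - 1) x]) := by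
    intro i x y hxy hh
    have h3 : ¬ hole i x = true := by
      rw [← hfix]
      intro h4
      rcases hh with h5 | h5
      · exact hxy (h4.symm.trans h5)
      · have hinj : Function.Injective (σ i) := by
          have : Function.Injective ((σ i)^[k i]) := by
            intro a b hab; simpa [hcyc] using hab
          have hk := (h1 i i.2 x x.2).2
          obtain ⟨m, hm⟩ : ∃ m, k i = m + 1 := ⟨k i - 1, by omega⟩
          rw [hm, Function.iterate_succ] at this
          exact this.of_comp
        exact hxy (hinj (h4.trans h5.symm))
    rw [if_neg h3]
    rcases hh with h5 | h5
    · simp [← h5, σ]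
    · have hk := (h1 i i.2 x x.2).2
      have : (σ i)^[k i - 1] x = y := by
        rw [← h5, ← Function.iterate_succ_apply, Nat.succ_eq_add_one, Nat.sub_add_cancel hk, hcyc]
      rw [itr_eq, ← hit, this]; simp
  refine ⟨σ, hcyc, hfix, ?_, ?_, ?_⟩
  · intro i x hx
    exact (h1 i i.2 x x.2).1.2.resolve_left hx
  · intro x y hxy hG
    have h3 := (chk_spec _ _ _ (h2 x x.2)).1 y
    have h4 := h3.1 ((mask_spec _ _ _).2 ⟨y.2, hG⟩)
    simp only [Nat.zero_testBit, Bool.false_eq_true, false_or, List.mem_flatMap,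
      List.mem_range] at h4
    obtain ⟨c, hc, h5⟩ := h4
    refine ⟨⟨c, hc⟩, ?_⟩
    split_ifs at h5 with h6
    · simp at h5
    · simp only [List.mem_cons, List.not_mem_nil, or_false] at h5
      rcases h5 with h5 | h5
      · left; apply Fin.ext; exact h5.symm
      · right
        rw [itr_eq] at h5
        have h7 := hit ⟨c, hc⟩ (k c - 1) x
        have h8 : (σ ⟨c, hc⟩)^[k c - 1] x = y := Fin.ext (h7.trans h5.symm)
        have hk := (h1 c hc x x.2).2
        rw [← h8, ← Function.iterate_succ_apply' (σ ⟨c, hc⟩), Nat.succ_eq_add_one,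
          Nat.sub_add_cancel hk]
        exact hcyc ⟨c, hc⟩ x
  · intro x y i j hxy hi hj
    have h3 := (chk_spec _ _ _ (h2 x x.2)).2.1
    rw [List.nodup_flatMap] at h3
    have h4 := h3.2
    by_contra hne
    have hne' : (i : ℕ) ≠ j := fun h => hne (Fin.ext h)
    have hsym : Std.Symm (Function.onFun List.Disjoint fun c =>
        if hole c x = true then [] else [f c x, itr (f c) (k c - 1) x]) :=
      ⟨fun a b h => List.Disjoint.symm h⟩
    have := h4.forall (List.mem_range.2 i.2) (List.mem_range.2 j.2) hne'
    exact this (key i x y hxy hi) (key j x y hxy hj)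

def neq (x y : ℕ) : Bool := !(x == y)

/-- Kirkman triple system of order `6 n + 3` -/
def K (n : ℕ) : Prop :=
  ∃ σ : Fin (3 * n + 1) → Fin (6 * n + 3) → Fin (6 * n + 3),
    Dec (fun x y => x ≠ y) (fun _ _ => False) (fun _ => 3) σ

theorem K_of_good (n : ℕ) (f : ℕ → ℕ → ℕ)
    (h : good (6 * n + 3) (3 * n + 1) neq (fun _ _ => false) (fun _ => 3) f = true) : K n := by
  obtain ⟨σ, hσ⟩ := dec_of_good h
  refine ⟨σ, ?_⟩
  have e1 : (fun x y : Fin (6 * n + 3) => neq x y = true) = (fun x y => x ≠ y) := by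
    funext x y; simp [neq, Fin.ext_iff]
  simpa [e1] using hσ

/-- Kirkman frame of type `6 ^ u` -/
def FR (u : ℕ) : Prop :=
  ∃ σ : Fin u × Fin 3 → Fin u × Fin 6 → Fin u × Fin 6,
    Dec (fun x y : Fin u × Fin 6 => x.1 ≠ y.1) (fun (c : Fin u × Fin 3) (x : Fin u × Fin 6) => c.1 = x.1)
      (fun _ : Fin u × Fin 3 => 3) σ

theorem FR_of_good (u : ℕ) (f : ℕ → ℕ → ℕ)
    (h : good (u * 6) (u * 3) (fun x y => neq (x / 6) (y / 6)) (fun c x => c / 3 == x / 6)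
      (fun _ => 3) f = true) : FR u := by
  obtain ⟨σ, hσ⟩ := dec_of_good h
  have := hσ.transport finProdFinEquiv finProdFinEquiv
  refine ⟨_, this.congr ?_ ?_ ?_⟩
  · intro x y
    simp [neq, finProdFinEquiv, Nat.add_mul_div_left, Nat.div_eq_of_lt, Fin.ext_iff]
  · intro x y
    simp [finProdFinEquiv, Nat.add_mul_div_left, Nat.div_eq_of_lt, Fin.ext_iff]
  · simp

/-- `C_3[7]` into `7 - s` triangle factors and `s` heptagon factors -/
def CD (s : ℕ) : Prop :=
  ∃ σ : Fin 7 → Fin 3 × Fin 7 → Fin 3 × Fin 7,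
    Dec (fun x y : Fin 3 × Fin 7 => x.1 ≠ y.1) (fun (_ : Fin 7) _ => False)
      (fun i : Fin 7 => if (i : ℕ) < 7 - s then 3 else 7) σ

theorem CD_of_good (s : ℕ) (f : ℕ → ℕ → ℕ)
    (h : good (3 * 7) 7 (fun x y => neq (x / 7) (y / 7)) (fun _ _ => false)
      (fun i => if i < 7 - s then 3 else 7) f = true) : CD s := by
  obtain ⟨σ, hσ⟩ := dec_of_good h
  have := hσ.transport finProdFinEquiv (Equiv.refl _)
  refine ⟨_, this.congr ?_ ?_ ?_⟩
  · intro x y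
    simp [neq, finProdFinEquiv, Nat.add_mul_div_left, Nat.div_eq_of_lt, Fin.ext_iff]
  · simp
  · intro i; rfl

/-- `K_21` into `10 - s` triangle factors and `s` heptagon factors -/
def HD (s : ℕ) : Prop :=
  ∃ σ : Fin 10 → Fin 3 × Fin 7 → Fin 3 × Fin 7,
    Dec (fun x y : Fin 3 × Fin 7 => x ≠ y) (fun (_ : Fin 10) _ => False)
      (fun i : Fin 10 => if (i : ℕ) < 10 - s then 3 else 7) σ

theorem HD_of_good (s : ℕ) (f : ℕ → ℕ → ℕ)
    (h : good (3 * 7) 10 neq (fun _ _ => false)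
      (fun i => if i < 10 - s then 3 else 7) f = true) : HD s := by
  obtain ⟨σ, hσ⟩ := dec_of_good h
  have := hσ.transport finProdFinEquiv (Equiv.refl _)
  refine ⟨_, this.congr ?_ ?_ ?_⟩
  · intro x y
    simp [neq, Fin.val_inj]
  · simp
  · intro i; rfl

def tabf (b : ℕ) (l : List ℕ) (c x : ℕ) : ℕ := (l.getD c 0 >>> (b * x)) % 2 ^ b

def cycf (w S T c p : ℕ) : ℕ :=
  bif Nat.blt c w then
    ((S >>> (7 * ((p % w + w - c) % w + w * (p / w)))) % 128 % w + c) % w +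
      w * ((S >>> (7 * ((p % w + w - c) % w + w * (p / w)))) % 128 / w)
  else bif p / w == 0 then (p + (T >>> (14 * (c - w))) % 128) % w + w
  else bif p / w == 1 then
    (p % w + (T >>> (14 * (c - w) + 7)) % 128 + (w - (T >>> (14 * (c - w))) % 128)) % w + 2 * w
  else (p % w + (w - (T >>> (14 * (c - w) + 7)) % 128)) % w

theorem K_1 : K 1 :=
  K_of_good 1 (cycf 3 1719671900471810 130) (by decide +kernel)

theorem K_3 : K 3 :=
  K_of_good 3 (cycf 7 11162546427977012121763059437547466992468366 173421953411) (by decide +kernel)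

theorem K_4 : K 4 :=
  K_of_good 4 (cycf 9 19252741655047250681696132603281987288327814605858636673 1715240022606720) (by decide +kernel)

theorem K_5 : K 5 :=
  K_of_good 5 (cycf 11 703109548139809494124480857183801978513791058791464556306363150729483 37470542878147167363) (by decide +kernel)

theorem K_6 : K 6 :=
  K_of_good 6 (cycf 13 2399314102008750682024698355993993372690541043209206162586104676954381664368363405 1071986994285716516701314) (by decide +kernel)

theorem K_7 : K 7 :=
  K_of_good 7 (cycf 15 18924516843108408599399861904951878349208922349941470354201452211738327029147961393476809297954 17563739507160002708769914880) (by decide +kernel)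

theorem K_8 : K 8 :=
  K_of_good 8 (cycf 17 98961337929348962515324753374460507828581769395545692040680905247274193099901864676654262492490744373297814 207610225210372569151729217635074) (by decide +kernel)

theorem K_9 : K 9 :=
  K_of_good 9 (cycf 19 60535263640122988499666853285518128187360080173948371042596533007521739118328079954435562987395632538503791438425296171 9398102642459662630292484962237154689) (by decide +kernel)

theorem K_10 : K 10 :=
  K_of_good 10 (cycf 21 2174932356750739631545351672137171877084247415057612944697279373086931355572817151628725421165938297310547419276355805805341306881579 121312730628624414954364801616397318782976) (by decide +kernel)

theorem K_11 : K 11 :=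
  K_of_good 11 (cycf 23 1982380580057955859640943833455184187579992900585251026197466503347663085488460887147921643648321365531067765012456045040743392532978262568557317 3063740727276549999527850090015340915886933888) (by decide +kernel)

theorem K_12 : K 12 :=
  K_of_good 12 (cycf 25 48915246582145791722402701633943493145406249417038047613641757430735758693420176351611875104344998873700900272332725529138707441364607705555925282403404449673 32588013538487806462649798310690041615470257342851) (by decide +kernel)

theorem K_13 : K 13 :=
  K_of_good 13 (cycf 27 12958612254062662666120132421562998928910585924618423942997610964531226461152492045526931675504388505891655811074721734068082918808585883668453219316867910022443889021445 437787450108153614558648890718705699023001468891465856) (by decide +kernel)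

theorem K_14 : K 14 :=
  K_of_good 14 (cycf 29 250608487046959850122087534169836554480145279983381886336503643531108532544415344090731002545377866411131448430572639645300276104471192366250651072229162250110552927876248099637758721 15858944087084425446820658338360624563140364182771057329408) (by decide +kernel)

theorem K_15 : K 15 :=
  K_of_good 15 (cycf 31 6175020749184783537280776708113826587259756851390336024454824733671028466348194269819869427896053489551899016702246647103570917191653809932115652438472788582008254381966662057895371597472618061983 298491255741576014569263854957770928169968931465141272713398785) (by decide +kernel)

theorem K_2 : K 2 :=
  K_of_good 2 (tabf 7 [7544912045286500787753747975, 317087656329790808477065757698, 658586078520275102740143817092, 953351059914042302434950316681, 1287711213075995618601936717057, 1602165366177094807558092407048, 1936177670948959647103258248331]) (by decide +kernel)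

theorem FR_4 : FR 4 :=
  FR_of_good 4 (tabf 6 [5669029943518083255838615662730484594253888, 6006672484727951528235789605417530663116864, 5315305073760534975710285229737578850951232, 359361113539899327962659598690971418153868, 697003654749767561981236039251149886112590, 5636243782351029091402997932381688619789, 2483224096354721780042435540787911120471250, 2820870562946162440709572693203589695091860, 2129499226592260135533999171420284115297555, 8135923166330479401280275073753834223600070, 8135923166320418624202183978402950511354375, 8135923166325332026961251722644079766172040]) (by decide +kernel)

theorem FR_5 : FR 5 :=
  FR_of_good 5 (tabf 6 [410858171216222663932946222114631351798586271639281728, 265730885893259930810330148493382513143706225398784064, 173656919249883014992842021925388331554305104019202112, 73402665216309415673877475499938151143720463837774670, 124614848618851863412777451780560677330373132715090706, 337121661472414491000617600576096747573732078555550924, 1180994769888506630174741748552046953785041929921864, 99903141007744817831332174817998241338128527083790727, 216285069823258215742250459391842069706683367541207575, 26939410172935489875930142609278514012817001618903693, 144057573337822839162735451352603206554832060882662282, 47931878786981789032735225367579266338030142521131721, 705048339028131158436136942404091779865679675359003659, 705048339025017570730759439921548918962896987715342918, 705048339026437820395563525719636490807950453369250255]) (by decide +kernel)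

theorem FR_6 : FR 6 :=
  FR_of_good 6 (tabf 6 [29906781230302155207720846116097514585171806936982484365175693376, 15151455450073126763629479505731376056064802028539747923825270848, 23555352628560697773597928510259661245803405915878562951475241024, 39936523293697286715239428799837982020746997908870053628554646548, 25181197512876055232413990171960715494740953799592133436140491938, 33585094691846481869753642426885148484507157362580748425334700239, 601128636893784196126118013052857448793090932813822583267157195, 35198887541129594762132822816818689940634365671410265794610545223, 42843506494786851280843365471010095199827697151431315729040318994, 10618818665138320650349826871495487334149759618928742686570088462, 44457299343566719656795301412233228538131839523590424254033814278, 3508111837888532465044210644761058266951026514465779114039890399, 19877039166631263943229377276898856911674451647166535491083133649, 5121713386479211873637420527296680843797424086012462522432000983, 13525610565367508879576516257602768361036721805214312521738814794, 58480294995079655909076419504724857990003888715023507595007652937, 58480294995057558725057438728310433505680794587229169088786920072, 58480294995103963954140650740634788978028138418346136867075305872]) (by decide +kernel)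

theorem CD_0 : CD 0 :=
  CD_of_good 0 (tabf 5 [7809044281081876380798665696519, 5191959443505934516138105219368, 2575153595327843211601857883465, 244032634368162020181293838698, 6500501734195549461037625619851, 3883425351094457724508254248364, 1275276620718697222327979253997]) (by decide +kernel)

theorem CD_2 : CD 2 :=
  CD_of_good 2 (tabf 5 [43410341626170318695047638439, 5073120789912394517188647953740, 6581005346473939319069287423245, 2734771656936164325834187158889, 7730938116165940975663358126472, 3897316219218965974180471193234, 14349201503349482486514911195663]) (by decide +kernel)

theorem CD_3 : CD 3 :=
  CD_of_good 3 (tabf 5 [6385298430342595321093848114445, 4045666818144069422893247998251, 7691364989708367228725086137578, 5268791327510389323156736483719, 12845346058120673943766987035081, 1270558196079014117897177477460, 11806389129823938589781639142828]) (by decide +kernel)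

theorem CD_6 : CD 6 :=
  CD_of_good 6 (tabf 5 [7809044281081876380798665696519, 6385724158832656709028979222985, 4247838213611937308777774686864, 11567514947135699272749798538573, 357935322849850346913342542218, 12924176223131855555431117401324, 10236539875046815644068522215987]) (by decide +kernel)

theorem CD_7 : CD 7 :=
  CD_of_good 7 (tabf 5 [14105217158678284186433460916679, 6462480079725981563492802968845, 5283538257418897724051350365419, 8122481237512996126546273313171, 8965472685280102434313906468492, 4249925573975230839758839331250, 15611703283843122873282408717940]) (by decide +kernel)

theorem HD_0 : HD 0 :=
  HD_of_good 0 (tabf 5 [10199913269361528917680734180462, 3178547670308135375689757168097, 21892429586527922364669751377993, 11987064242817013590593485966663, 19811225450958202373063108078864, 17921914675761327695817361204771, 6616108335815048917414692866178, 3883425351170624917903328588138, 244032634330330621094339523979, 1275276620718697222327979253997]) (by decide +kernel)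

theorem HD_1 : HD 1 :=
  HD_of_good 1 (tabf 5 [12732430344369018959233909363207, 2820822933963841105996074370308, 10159273864060442271047790175409, 1886752554837798102219923724875, 20842235726132839537317015211400, 19222978475393797948086326801698, 7962900095559599586374767061103, 244032634406237739548040113481, 5191959443688021732078141223274, 18563628404540780304358161124417]) (by decide +kernel)

theorem HD_10 : HD 10 :=
  HD_of_good 10 (tabf 5 [14105217158678284186433460916679, 6462480079725981563492802968845, 5283538257418897724051350365419, 8122481237512996126546273313171, 8965472685280102434313906468492, 4249925573975230839758839331250, 15611703283843122873282408717940, 18563628404540780304358161124417, 19594872390807085989922290700386, 20894749365606137444092872955011]) (by decide +kernel)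

/-- a family of triangle factors living on parts of the index and point types -/
structure D3 {X I : Type} (inI : I → Prop) (inP : X → Prop) (G : X → X → Prop)
    (hole : I → X → Prop) (σ : I → X → X) : Prop where
  maps : ∀ i x, inI i → inP x → inP (σ i x)
  cyc : ∀ i x, inI i → inP x → σ i (σ i (σ i x)) = x
  fix : ∀ i x, inI i → inP x → (σ i x = x ↔ hole i x)
  adj : ∀ i x, inI i → inP x → ¬ hole i x → G x (σ i x)
  ex : ∀ x y, inP x → inP y → x ≠ y → G x y → ∃ i, inI i ∧ (σ i x = y ∨ σ i y = x)
  uniq : ∀ x y i j, inP x → inP y → inI i → inI j → x ≠ y → (σ i x = y ∨ σ i y = x) →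
    (σ j x = y ∨ σ j y = x) → i = j

theorem D3.of_dec {X I X' I' : Type} {G' : X' → X' → Prop} {hole' : I' → X' → Prop}
    {σ : I' → X' → X'} (h : Dec G' hole' (fun _ => 3) σ) (εX : X' → X) (εI : I' → I)
    (hX : Function.Injective εX) (hI : Function.Injective εI)
    (inI : I → Prop) (inP : X → Prop) (G : X → X → Prop) (hole : I → X → Prop)
    (h1 : ∀ i, inI i ↔ ∃ i', εI i' = i) (h2 : ∀ x, inP x ↔ ∃ x', εX x' = x)
    (hG : ∀ x y, G (εX x) (εX y) ↔ G' x y) (hh : ∀ i x, hole (εI i) (εX x) ↔ hole' i x) :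
    ∃ τ : I → X → X, (∀ i x, τ (εI i) (εX x) = εX (σ i x)) ∧ D3 inI inP G hole τ := by
  classical
  let τ : I → X → X := fun i x =>
    if H : ∃ q : I' × X', εI q.1 = i ∧ εX q.2 = x then εX (σ H.choose.1 H.choose.2) else x
  have hτ : ∀ i x, τ (εI i) (εX x) = εX (σ i x) := by
    intro i x
    have H : ∃ q : I' × X', εI q.1 = εI i ∧ εX q.2 = εX x := ⟨(i, x), rfl, rfl⟩
    have e1 := hI H.choose_spec.1
    have e2 := hX H.choose_spec.2
    simp only [τ]
    rw [dif_pos H, e1, e2]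
  refine ⟨τ, hτ, ?_, ?_, ?_, ?_, ?_, ?_⟩
  · intro i x hi hx
    obtain ⟨i, rfl⟩ := (h1 i).1 hi
    obtain ⟨x, rfl⟩ := (h2 x).1 hx
    rw [hτ, h2]; exact ⟨_, rfl⟩
  · intro i x hi hx
    obtain ⟨i, rfl⟩ := (h1 i).1 hi
    obtain ⟨x, rfl⟩ := (h2 x).1 hx
    rw [hτ, hτ, hτ]
    exact congrArg εX (h.cyc i x)
  · intro i x hi hx
    obtain ⟨i, rfl⟩ := (h1 i).1 hi
    obtain ⟨x, rfl⟩ := (h2 x).1 hx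
    rw [hτ, hX.eq_iff, h.fix, hh]
  · intro i x hi hx hn
    obtain ⟨i, rfl⟩ := (h1 i).1 hi
    obtain ⟨x, rfl⟩ := (h2 x).1 hx
    rw [hh] at hn
    rw [hτ, hG]; exact h.adj _ _ hn
  · intro x y hx hy hxy hg
    obtain ⟨x, rfl⟩ := (h2 x).1 hx
    obtain ⟨y, rfl⟩ := (h2 y).1 hy
    obtain ⟨i, hi⟩ := h.ex x y (fun e => hxy (congrArg εX e)) ((hG x y).1 hg)
    exact ⟨εI i, (h1 _).2 ⟨i, rfl⟩, by rw [hτ, hτ, hX.eq_iff, hX.eq_iff]; exact hi⟩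
  · intro x y i j hx hy hi hj hxy a b
    obtain ⟨i, rfl⟩ := (h1 i).1 hi
    obtain ⟨j, rfl⟩ := (h1 j).1 hj
    obtain ⟨x, rfl⟩ := (h2 x).1 hx
    obtain ⟨y, rfl⟩ := (h2 y).1 hy
    rw [hτ, hτ, hX.eq_iff, hX.eq_iff] at a b
    rw [h.uniq x y i j (fun e => hxy (congrArg εX e)) a b]

theorem D3.holes {X I : Type} {inI : I → Prop} {inP : X → Prop} {G : X → X → Prop}
    {hole : I → X → Prop} {σ : I → X → X} (h : D3 inI inP G hole σ) (i : I) (x : X)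
    (hi : inI i) (hx : inP x) (hh : hole i (σ i x)) : hole i x := by
  have h1 := (h.fix i _ hi (h.maps _ _ hi hx)).2 hh
  have h2 := h.cyc i x hi hx
  rw [h1, h1] at h2
  exact (h.fix i x hi hx).1 h2

/-- normalised Kirkman triple system on a type -/
theorem K.norm {n : ℕ} (h : K n) (T : Type) [Fintype T] (hT : Fintype.card T = n) :
    ∃ κ : Option (T × Fin 3) → (T × Fin 6 ⊕ Fin 3) → (T × Fin 6 ⊕ Fin 3),
      Dec (fun x y => x ≠ y) (fun _ _ => False) (fun _ => 3) κ ∧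
      ∀ i, κ none (Sum.inr i) = Sum.inr (i + 1) := by
  classical
  obtain ⟨σ, hσ⟩ := h
  set s := σ 0 with hs
  have h3 : ∀ x, s (s (s x)) = x := fun x => hσ.cyc 0 x
  have hf : ∀ x, s x ≠ x := fun x hx => (hσ.fix 0 x).1 hx
  let f3 : Fin 3 → Fin (6 * n + 3) := ![0, s 0, s (s 0)]
  have hinj : Function.Injective f3 := by
    intro a b hab
    have e1 := hf 0
    have e2 := hf (s 0)
    have e3 := hf (s (s 0))
    rw [h3] at e3
    have e1' := e1.symm
    have e2' := e2.symm
    have e3' := e3.symm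
    fin_cases a <;> fin_cases b <;> simp_all [f3]
  have hstep : ∀ i, f3 (i + 1) = s (f3 i) := by
    intro i
    fin_cases i <;> simp [f3, h3]
  obtain ⟨g, hg⟩ := Finset.exists_equiv_extend_of_card_eq (α := T × Fin 6 ⊕ Fin 3)
    (t := (Finset.univ : Finset (Fin (6 * n + 3))))
    (by simp [hT]; ring) (s := Finset.univ.image Sum.inr) (f := Sum.elim (fun _ => 0) f3)
    (by simp) (by
      intro a ha b hb hab
      simp only [Finset.coe_image, Finset.coe_univ, Set.image_univ, Set.mem_range] at ha hb
      obtain ⟨a, rfl⟩ := ha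
      obtain ⟨b, rfl⟩ := hb
      simp only [Sum.elim_inr] at hab
      rw [hinj hab])
  let e : (T × Fin 6 ⊕ Fin 3) ≃ Fin (6 * n + 3) :=
    g.trans ⟨Subtype.val, fun x => ⟨x, Finset.mem_univ x⟩, fun _ => rfl, fun _ => rfl⟩
  have he : ∀ i, e (Sum.inr i) = f3 i := fun i => hg _ (by simp)
  have hc : Fintype.card (Option (T × Fin 3)) = Fintype.card (Fin (3 * n + 1)) := by
    simp [hT]; ring
  let f0 := Fintype.equivOfCardEq hc
  let f := f0.trans (Equiv.swap (f0 none) 0)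
  have hf0 : f none = 0 := by simp [f]
  refine ⟨_, (hσ.transport e f).congr (by simp) (by simp) (by simp), ?_⟩
  intro i
  simp only [hf0, he]
  rw [Equiv.symm_apply_eq, he, hstep]

section GDD

variable {X Γ : Type}

def inGI (g : X → Γ) (γ : Γ) (i : Option (X × Fin 3)) : Prop := ∀ c, i = some c → g c.1 = γ
def inGP (g : X → Γ) (γ : Γ) (p : X × Fin 6 ⊕ Fin 3) : Prop := ∀ c, p = Sum.inl c → g c.1 = γ

theorem K.on [Fintype X] (g : X → Γ) (γ : Γ) {n : ℕ} (h : K n)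
    (hn : Nat.card {x // g x = γ} = n) :
    ∃ κ : Option (X × Fin 3) → (X × Fin 6 ⊕ Fin 3) → (X × Fin 6 ⊕ Fin 3),
      D3 (inGI g γ) (inGP g γ) (fun x y => x ≠ y) (fun _ _ => False) κ ∧
      ∀ i, κ none (Sum.inr i) = Sum.inr (i + 1) := by
  classical
  obtain ⟨κ, hκ, hk⟩ := h.norm {x // g x = γ} (by rw [← Nat.card_eq_fintype_card, hn])
  have hX : Function.Injective (Sum.map (Prod.map Subtype.val id) id :
      ({x // g x = γ} × Fin 6 ⊕ Fin 3) → (X × Fin 6 ⊕ Fin 3)) :=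
    Function.Injective.sumMap (Function.Injective.prodMap Subtype.val_injective
      Function.injective_id) Function.injective_id
  have hI : Function.Injective (Option.map (Prod.map Subtype.val id) :
      Option ({x // g x = γ} × Fin 3) → Option (X × Fin 3)) :=
    Option.map_injective (Function.Injective.prodMap Subtype.val_injective
      Function.injective_id)
  obtain ⟨τ, h1, h2⟩ := D3.of_dec hκ _ _ hX hI (inGI g γ) (inGP g γ) (fun x y => x ≠ y)
    (fun _ _ => False)
    (by
      intro i
      constructor
      · intro h
        rcases i with _ | ⟨x, j⟩
        · exact ⟨none, rfl⟩
        · exact ⟨some (⟨x, h _ rfl⟩, j), rfl⟩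
      · rintro ⟨i, rfl⟩ c hc
        rcases i with _ | ⟨⟨x, hx⟩, j⟩
        · simp at hc
        · simp at hc; subst hc; exact hx)
    (by
      intro i
      constructor
      · intro h
        rcases i with ⟨x, j⟩ | j
        · exact ⟨Sum.inl (⟨x, h _ rfl⟩, j), rfl⟩
        · exact ⟨Sum.inr j, rfl⟩
      · rintro ⟨i, rfl⟩ c hc
        rcases i with ⟨⟨x, hx⟩, j⟩ | j
        · simp at hc; subst hc; exact hx
        · simp at hc)
    (fun x y => by rw [Ne, hX.eq_iff]) (by simp)
  refine ⟨τ, h2, fun i => ?_⟩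
  have := h1 none (Sum.inr i)
  rw [hk] at this
  exact this

theorem FR.on (inc : X → Prop) {n : ℕ} (h : FR n)
    (e : {x // inc x} ≃ Fin n) :
    ∃ φ : X × Fin 3 → X × Fin 6 → X × Fin 6,
      D3 (fun c => inc c.1) (fun p => inc p.1) (fun x y => x.1 ≠ y.1) (fun c p => c.1 = p.1) φ := by
  obtain ⟨σ, hσ⟩ := h
  have hi : Function.Injective (fun i : Fin n => (e.symm i : X)) :=
    Subtype.val_injective.comp e.symm.injective
  have hr : ∀ x, inc x → ∃ i, (e.symm i : X) = x := fun x hx => ⟨e ⟨x, hx⟩, by simp⟩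
  obtain ⟨τ, -, h2⟩ := D3.of_dec hσ (Prod.map (fun i => (e.symm i : X)) id)
    (Prod.map (fun i => (e.symm i : X)) id)
    (hi.prodMap Function.injective_id) (hi.prodMap Function.injective_id)
    (fun c => inc c.1) (fun p => inc p.1) (fun x y => x.1 ≠ y.1) (fun c p => c.1 = p.1)
    (by
      rintro ⟨x, j⟩
      constructor
      · intro h
        obtain ⟨i, hi⟩ := hr x h
        exact ⟨(i, j), by simp [hi]⟩
      · rintro ⟨⟨i, j⟩, h⟩
        simp only [Prod.map_apply, Prod.mk.injEq] at h
        rw [← h.1]; exact (e.symm i).2)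
    (by
      rintro ⟨x, j⟩
      constructor
      · intro h
        obtain ⟨i, hi⟩ := hr x h
        exact ⟨(i, j), by simp [hi]⟩
      · rintro ⟨⟨i, j⟩, h⟩
        simp only [Prod.map_apply, Prod.mk.injEq] at h
        rw [← h.1]; exact (e.symm i).2)
    (fun x y => not_congr hi.eq_iff) (fun x y => hi.eq_iff)
  exact ⟨τ, h2⟩

open Classical in
noncomputable def tau {𝓑 : Type} (g : X → Γ) (blk : X → X → 𝓑)
    (κ : Γ → Option (X × Fin 3) → (X × Fin 6 ⊕ Fin 3) → (X × Fin 6 ⊕ Fin 3))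
    (φ : 𝓑 → X × Fin 3 → X × Fin 6 → X × Fin 6) :
    Option (X × Fin 3) → (X × Fin 6 ⊕ Fin 3) → (X × Fin 6 ⊕ Fin 3)
  | none, Sum.inr a => Sum.inr (a + 1)
  | some c, Sum.inr a => κ (g c.1) (some c) (Sum.inr a)
  | none, Sum.inl p => κ (g p.1) none (Sum.inl p)
  | some c, Sum.inl p => if g c.1 = g p.1 then κ (g c.1) (some c) (Sum.inl p) else
      Sum.inl (φ (blk c.1 p.1) c p)

theorem gdd {𝓑 : Type} [Nonempty Γ] (g : X → Γ) (inc : 𝓑 → X → Prop) (blk : X → X → 𝓑)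
    (κ : Γ → Option (X × Fin 3) → (X × Fin 6 ⊕ Fin 3) → (X × Fin 6 ⊕ Fin 3))
    (φ : 𝓑 → X × Fin 3 → X × Fin 6 → X × Fin 6)
    (hκ : ∀ γ, D3 (inGI g γ) (inGP g γ) (fun x y => x ≠ y) (fun _ _ => False) (κ γ))
    (hκ0 : ∀ γ i, κ γ none (Sum.inr i) = Sum.inr (i + 1))
    (hφ : ∀ b, D3 (fun c => inc b c.1) (fun p => inc b p.1) (fun x y => x.1 ≠ y.1)
      (fun c p => c.1 = p.1) (φ b))
    (hb1 : ∀ x y, g x ≠ g y → inc (blk x y) x ∧ inc (blk x y) y)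
    (hb2 : ∀ x y b, g x ≠ g y → inc b x → inc b y → b = blk x y)
    (hb3 : ∀ x y b, inc b x → inc b y → x ≠ y → g x ≠ g y) :
    Dec (fun x y => x ≠ y) (fun _ _ => False) (fun _ => 3) (tau g blk κ φ) := by
  have hA : ∀ γ i p, inGI g γ i → inGP g γ p → tau g blk κ φ i p = κ γ i p := by
    intro γ i p hi hp
    rcases i with _ | c <;> rcases p with p | a
    · have := hp p rfl; subst this; rfl
    · exact (hκ0 γ a).symm
    · have h1 := hp p rfl; have h2 := hi c rfl; subst h2
      simp only [tau]; rw [if_pos h1.symm]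
    · have h2 := hi c rfl; subst h2; rfl
  have hB : ∀ b c p, inc b c.1 → inc b p.1 → c.1 ≠ p.1 →
      tau g blk κ φ (some c) (Sum.inl p) = Sum.inl (φ b c p) := by
    intro b c p hc hp hne
    have h1 := hb3 _ _ b hc hp hne
    simp only [tau]
    rw [if_neg h1, ← hb2 _ _ b h1 hc hp]
  have hcov : ∀ i p, (∃ γ, inGI g γ i ∧ inGP g γ p) ∨
      ∃ b c q, i = some c ∧ p = Sum.inl q ∧ inc b c.1 ∧ inc b q.1 ∧ c.1 ≠ q.1 := by
    intro i p
    rcases i with _ | c <;> rcases p with p | a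
    · exact Or.inl ⟨g p.1, by intro c hc; simp at hc, by intro c hc; simp at hc; rw [hc]⟩
    · exact Or.inl ⟨Classical.arbitrary Γ, by intro c hc; simp at hc, by intro c hc; simp at hc⟩
    · by_cases h : g c.1 = g p.1
      · exact Or.inl ⟨g p.1, by intro c hc; simp at hc; rw [← hc, h],
          by intro c hc; simp at hc; rw [hc]⟩
      · obtain ⟨h1, h2⟩ := hb1 _ _ h
        exact Or.inr ⟨_, c, p, rfl, rfl, h1, h2, fun e => h (by rw [e])⟩
    · exact Or.inl ⟨g c.1, by intro c hc; simp at hc; rw [← hc], by intro c hc; simp at hc⟩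
  have hB' : ∀ b c p, inc b c.1 → inc b p.1 → c.1 ≠ p.1 →
      c.1 ≠ (φ b c p).1 ∧ inc b (φ b c p).1 := fun b c p hc hp hne =>
    ⟨fun h => hne ((hφ b).holes c p hc hp h), (hφ b).maps c p hc hp⟩
  have hfix : ∀ i p, tau g blk κ φ i p ≠ p := by
    intro i p
    rcases hcov i p with ⟨γ, h1, h2⟩ | ⟨b, c, q, rfl, rfl, h1, h2, h3⟩
    · rw [hA γ i p h1 h2]
      exact fun h => ((hκ γ).fix i p h1 h2).1 h
    · rw [hB b c q h1 h2 h3]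
      intro h
      exact h3 (((hφ b).fix c q h1 h2).1 (Sum.inl_injective h))
  have hdir : ∀ i p q, p ≠ q → tau g blk κ φ i p = q →
      (∃ γ, inGI g γ i ∧ inGP g γ p ∧ inGP g γ q ∧ (κ γ i p = q ∨ κ γ i q = p)) ∨
      (∃ b c p' q', i = some c ∧ p = Sum.inl p' ∧ q = Sum.inl q' ∧ inc b c.1 ∧ inc b p'.1 ∧
        inc b q'.1 ∧ g p'.1 ≠ g q'.1 ∧ (φ b c p' = q' ∨ φ b c q' = p')) := by
    intro i p q hpq h
    rcases hcov i p with ⟨γ, h1, h2⟩ | ⟨b, c, q', rfl, rfl, h1, h2, h3⟩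
    · rw [hA γ i p h1 h2] at h
      exact Or.inl ⟨γ, h1, h2, h ▸ (hκ γ).maps i p h1 h2, Or.inl h⟩
    · rw [hB b c q' h1 h2 h3] at h
      refine Or.inr ⟨b, c, q', _, rfl, rfl, h.symm, h1, h2, (hB' b c q' h1 h2 h3).2, ?_,
        Or.inl rfl⟩
      exact hb3 _ _ b h2 (hB' b c q' h1 h2 h3).2 ((hφ b).adj c q' h1 h2 h3)
  have hdir2 : ∀ i p q, p ≠ q → (tau g blk κ φ i p = q ∨ tau g blk κ φ i q = p) →
      (∃ γ, inGI g γ i ∧ inGP g γ p ∧ inGP g γ q ∧ (κ γ i p = q ∨ κ γ i q = p)) ∨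
      (∃ b c p' q', i = some c ∧ p = Sum.inl p' ∧ q = Sum.inl q' ∧ inc b c.1 ∧ inc b p'.1 ∧
        inc b q'.1 ∧ g p'.1 ≠ g q'.1 ∧ (φ b c p' = q' ∨ φ b c q' = p')) := by
    intro i p q hpq h
    rcases h with h | h
    · exact hdir i p q hpq h
    · rcases hdir i q p hpq.symm h with ⟨γ, a1, a2, a3, a4⟩ |
        ⟨b, c, p', q', a1, a2, a3, a4, a5, a6, a7, a8⟩
      · exact Or.inl ⟨γ, a1, a3, a2, a4.symm⟩
      · exact Or.inr ⟨b, c, q', p', a1, a3, a2, a4, a6, a5, a7.symm, a8.symm⟩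
  refine ⟨?_, ?_, ?_, ?_, ?_⟩
  · intro i p
    change tau g blk κ φ i (tau g blk κ φ i (tau g blk κ φ i p)) = p
    rcases hcov i p with ⟨γ, h1, h2⟩ | ⟨b, c, q, rfl, rfl, h1, h2, h3⟩
    · have m1 := (hκ γ).maps i p h1 h2
      have m2 := (hκ γ).maps i _ h1 m1
      rw [hA γ i p h1 h2, hA γ i _ h1 m1, hA γ i _ h1 m2, (hκ γ).cyc i p h1 h2]
    · obtain ⟨m1, m2⟩ := hB' b c q h1 h2 h3
      obtain ⟨m3, m4⟩ := hB' b c _ h1 m2 m1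
      rw [hB b c q h1 h2 h3, hB b c _ h1 m2 m1, hB b c _ h1 m4 m3, (hφ b).cyc c q h1 h2]
  · intro i p
    simp [hfix i p]
  · intro i p _
    exact (hfix i p).symm
  · intro p q hpq _
    by_cases h : ∃ γ, inGP g γ p ∧ inGP g γ q
    · obtain ⟨γ, h1, h2⟩ := h
      obtain ⟨i, hi, hh⟩ := (hκ γ).ex p q h1 h2 hpq hpq
      exact ⟨i, by rw [hA γ i p hi h1, hA γ i q hi h2]; exact hh⟩
    · rcases p with p | a <;> rcases q with q | a'
      · have hg : g p.1 ≠ g q.1 := by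
          intro hg
          exact h ⟨g p.1, by intro c hc; simp at hc; rw [hc],
            by intro c hc; simp at hc; rw [← hc, hg]⟩
        obtain ⟨h1, h2⟩ := hb1 _ _ hg
        have hne : p ≠ q := fun e => hpq (by rw [e])
        have hne1 : p.1 ≠ q.1 := fun e => hg (by rw [e])
        set b := blk p.1 q.1
        obtain ⟨c, hc, hh⟩ := (hφ b).ex p q h1 h2 hne hne1
        have k1 : c.1 ≠ p.1 ∧ c.1 ≠ q.1 := by
          rcases hh with hh | hh
          · have : c.1 ≠ p.1 := fun e => hne ((((hφ b).fix c p hc h1).2 e).symm.trans hh)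
            refine ⟨this, ?_⟩
            have := (hB' b c p hc h1 this).1
            rwa [hh] at this
          · have : c.1 ≠ q.1 := fun e => hne.symm ((((hφ b).fix c q hc h2).2 e).symm.trans hh)
            refine ⟨?_, this⟩
            have := (hB' b c q hc h2 this).1
            rwa [hh] at this
        refine ⟨some c, ?_⟩
        rw [hB b c p hc h1 k1.1, hB b c q hc h2 k1.2]
        simpa using hh
      · exact absurd ⟨g p.1, by intro c hc; simp at hc; rw [hc], by intro c hc; simp at hc⟩ h
      · exact absurd ⟨g q.1, by intro c hc; simp at hc, by intro c hc; simp at hc; rw [hc]⟩ h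
      · exact absurd ⟨Classical.arbitrary Γ, by intro c hc; simp at hc,
          by intro c hc; simp at hc⟩ h
  · intro p q i j hpq h1 h2
    have f3 : ∀ a b : Fin 3, a ≠ b → a + 1 = b ∨ b + 1 = a := by decide
    have both : ∀ k a b, Sum.inr a = p → Sum.inr b = q →
        (tau g blk κ φ k p = q ∨ tau g blk κ φ k q = p) → k = none := by
      intro k a b ha hb hk
      rcases hdir2 k p q hpq hk with ⟨γ, a1, a2, a3, a4⟩ |
        ⟨b, c, p', q', a1, a2, a3, a4, a5, a6, a7, a8⟩
      · refine (hκ γ).uniq p q k none a2 a3 a1 (by intro c hc; simp at hc) hpq a4 ?_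
        subst ha hb
        rw [hκ0, hκ0]
        simpa using f3 a b (fun e => hpq (by rw [e]))
      · rw [a2] at ha; simp at ha
    rcases hdir2 i p q hpq h1 with ⟨γ, a1, a2, a3, a4⟩ |
        ⟨b, c, p', q', a1, a2, a3, a4, a5, a6, a7, a8⟩ <;>
    rcases hdir2 j p q hpq h2 with ⟨γ', a1', a2', a3', a4'⟩ |
        ⟨b', c', p'', q'', a1', a2', a3', a4', a5', a6', a7', a8'⟩
    · by_cases hb : ∃ a b, Sum.inr a = p ∧ Sum.inr b = q
      · obtain ⟨a, b, ha, hb⟩ := hb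
        rw [both i a b ha hb h1, both j a b ha hb h2]
      · have : γ = γ' := by
          rcases p with p | a
          · rw [← a2 p rfl, a2' p rfl]
          · rcases q with q | b
            · rw [← a3 q rfl, a3' q rfl]
            · exact absurd ⟨a, b, rfl, rfl⟩ hb
        subst this
        exact (hκ γ).uniq p q i j a2 a3 a1 a1' hpq a4 a4'
    · exact absurd ((a2 _ a2').trans (a3 _ a3').symm) a7'
    · exact absurd ((a2' _ a2).trans (a3' _ a3).symm) a7
    · subst a2 a3 a1 a1'
      have e1 := Sum.inl_injective a2'
      have e2 := Sum.inl_injective a3'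
      subst e1 e2
      have : b = b' := (hb2 _ _ b a7 a5 a6).trans (hb2 _ _ b' a7 a5' a6').symm
      subst this
      rw [(hφ b).uniq p' q' c c' a5 a6 a4 a4' (fun e => hpq (by rw [e])) a8 a8']

theorem K_of_gdd {𝓑 : Type} [Fintype X] [Nonempty Γ] (g : X → Γ) (inc : 𝓑 → X → Prop)
    (blk : X → X → 𝓑)
    (hK : ∀ γ, K (Nat.card {x // g x = γ}))
    (hF : ∀ b, ∃ u, FR u ∧ Nonempty ({x // inc b x} ≃ Fin u))
    (hb1 : ∀ x y, g x ≠ g y → inc (blk x y) x ∧ inc (blk x y) y)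
    (hb2 : ∀ x y b, g x ≠ g y → inc b x → inc b y → b = blk x y)
    (hb3 : ∀ x y b, inc b x → inc b y → x ≠ y → g x ≠ g y) : K (Fintype.card X) := by
  have h1 := fun γ => K.on g γ (hK γ) rfl
  choose κ hκ hκ0 using h1
  have h2 : ∀ b, ∃ φ : X × Fin 3 → X × Fin 6 → X × Fin 6,
      D3 (fun c => inc b c.1) (fun p => inc b p.1) (fun x y => x.1 ≠ y.1)
        (fun c p => c.1 = p.1) φ := by
    intro b
    obtain ⟨u, hu, ⟨e⟩⟩ := hF b
    exact FR.on (inc b) hu e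
  choose φ hφ using h2
  have := gdd g inc blk κ φ hκ hκ0 hφ hb1 hb2 hb3
  have e1 : Fin (6 * Fintype.card X + 3) ≃ (X × Fin 6 ⊕ Fin 3) :=
    Fintype.equivOfCardEq (by simp; ring)
  have e2 : Fin (3 * Fintype.card X + 1) ≃ Option (X × Fin 3) :=
    Fintype.equivOfCardEq (by simp; ring)
  exact ⟨_, (this.transport e1 e2).congr (by simp) (by simp) (by simp)⟩

end GDD

section TD

variable {R : Type} [CommRing R] [Fintype R]

def tdg {k : ℕ} {T : Finset R} : (Fin k × R) ⊕ {y // y ∈ T} → Option (Fin k)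
  | Sum.inl p => some p.1
  | Sum.inr _ => none

def tdinc {k : ℕ} {T : Finset R} (c : Fin k → R) (b : R × R) : (Fin k × R) ⊕ {y // y ∈ T} → Prop
  | Sum.inl p => p.2 = b.1 + c p.1 * b.2
  | Sum.inr t => (t : R) = b.2

noncomputable def tdblk {k : ℕ} {T : Finset R} (c : Fin k → R) :
    (Fin k × R) ⊕ {y // y ∈ T} → (Fin k × R) ⊕ {y // y ∈ T} → R × R
  | Sum.inl p, Sum.inl q =>
    (p.2 - c p.1 * ((p.2 - q.2) * Ring.inverse (c p.1 - c q.1)),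
      (p.2 - q.2) * Ring.inverse (c p.1 - c q.1))
  | Sum.inl p, Sum.inr t => (p.2 - c p.1 * t, t)
  | Sum.inr t, Sum.inl p => (p.2 - c p.1 * t, t)
  | Sum.inr _, Sum.inr _ => (0, 0)

theorem K_td {k : ℕ} (T : Finset R) (c : Fin k → R) (hc : ∀ i j, i ≠ j → IsUnit (c i - c j))
    (hm : K (Fintype.card R)) (ht : K T.card) (h1 : FR k) (h2 : FR (k + 1)) :
    K (k * Fintype.card R + T.card) := by
  classical
  have key := K_of_gdd (X := (Fin k × R) ⊕ {y // y ∈ T}) tdg (tdinc c) (tdblk c) ?_ ?_ ?_ ?_ ?_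
  · simpa using key
  · intro γ
    rcases γ with _ | i
    · have : Nat.card {x : (Fin k × R) ⊕ {y // y ∈ T} // tdg x = none} = T.card := by
        rw [← Fintype.card_coe T, ← Nat.card_eq_fintype_card]
        refine Nat.card_congr (Equiv.symm (Equiv.ofBijective
          (fun y => ⟨Sum.inr y, rfl⟩) ⟨?_, ?_⟩))
        · intro y y' h
          exact Sum.inr_injective (Subtype.ext_iff.1 h)
        · rintro ⟨⟨i', y⟩ | t, h⟩
          · simp [tdg] at h
          · exact ⟨t, rfl⟩
      rw [this]; exact ht
    · have : Nat.card {x : (Fin k × R) ⊕ {y // y ∈ T} // tdg x = some i} = Fintype.card R := by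
        rw [← Nat.card_eq_fintype_card]
        refine Nat.card_congr ⟨fun x => match x with
          | ⟨Sum.inl p, _⟩ => p.2
          | ⟨Sum.inr t, h⟩ => 0, fun y => ⟨Sum.inl (i, y), rfl⟩, ?_, fun y => rfl⟩
        rintro ⟨⟨i', y⟩ | t, h⟩
        · simp only [tdg, Option.some.injEq] at h; subst h; rfl
        · simp [tdg] at h
      rw [this]; exact hm
  · rintro ⟨a, y⟩
    by_cases hy : y ∈ T
    · refine ⟨k + 1, h2, ⟨Equiv.trans (Equiv.symm ?_) (finSuccEquiv k).symm⟩⟩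
      exact {
        toFun := fun o => match o with
          | none => ⟨Sum.inr ⟨y, hy⟩, rfl⟩
          | some i => ⟨Sum.inl (i, a + c i * y), rfl⟩
        invFun := fun x => tdg x.1
        left_inv := by rintro (_ | i) <;> rfl
        right_inv := by
          rintro ⟨⟨i', z⟩ | t, h⟩
          · simp only [tdinc] at h; subst h; rfl
          · simp only [tdinc] at h; subst h; rfl }
    · refine ⟨k, h1, ⟨Equiv.symm ?_⟩⟩
      exact {
        toFun := fun i => ⟨Sum.inl (i, a + c i * y), rfl⟩
        invFun := fun x => match x with
          | ⟨Sum.inl p, _⟩ => p.1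
          | ⟨Sum.inr t, h⟩ => absurd (show y ∈ T from (show (t : R) = y from h) ▸ t.2) hy
        left_inv := by intro i; rfl
        right_inv := by
          rintro ⟨⟨i', z⟩ | t, h⟩
          · simp only [tdinc] at h; subst h; rfl
          · exact absurd (show y ∈ T from (show (t : R) = y from h) ▸ t.2) hy }
  · rintro (⟨i, z⟩ | t) (⟨j, w⟩ | t') h
    · have hu := hc i j (fun e => h (by rw [tdg, tdg, e]))
      have := Ring.mul_inverse_cancel _ hu
      simp only [tdinc, tdblk]
      constructor
      · ring
      · linear_combination (z - w) * this
    · simp [tdinc, tdblk]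
    · simp [tdinc, tdblk]
    · simp [tdg] at h
  · rintro (⟨i, z⟩ | t) (⟨j, w⟩ | t') ⟨a, y⟩ h b1 b2
    · have hu := hc i j (fun e => h (by rw [tdg, tdg, e]))
      have := Ring.mul_inverse_cancel _ hu
      simp only [tdinc, tdblk] at b1 b2 ⊢
      have hy : y = (z - w) * Ring.inverse (c i - c j) := by
        rw [b1, b2]; linear_combination (-y) * this
      rw [← hy, b1]; simp
    · simp only [tdinc, tdblk] at b1 b2 ⊢
      rw [b2, b1]; simp
    · simp only [tdinc, tdblk] at b1 b2 ⊢
      rw [b2, b1]; simp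
    · simp [tdg] at h
  · rintro (⟨i, z⟩ | t) (⟨j, w⟩ | t') ⟨a, y⟩ b1 b2 h
    · simp only [tdinc, tdg] at b1 b2 ⊢
      intro e
      simp only [Option.some.injEq] at e
      subst e; exact h (by rw [b1, b2])
    · simp [tdg]
    · simp [tdg]
    · simp only [tdinc] at b1 b2
      exact absurd (congrArg Sum.inr (Subtype.ext (b1.trans b2.symm))) h

end TD

theorem K_four {R : Type} [CommRing R] [Fintype R] {m t n : ℕ} (hR : Fintype.card R = m)
    (c : Fin 4 → R) (hc : ∀ i j, i ≠ j → IsUnit (c i - c j)) (hm : K m) (ht : K t)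
    (htm : t ≤ m) (hn : n = 4 * m + t) : K n := by
  subst hR hn
  obtain ⟨T, -, hT⟩ := Finset.exists_subset_card_eq (s := (Finset.univ : Finset R)) (n := t)
    (by simpa using htm)
  subst hT
  exact K_td T c hc hm ht FR_4 FR_5

theorem K_five {R : Type} [CommRing R] [Fintype R] {m t n : ℕ} (hR : Fintype.card R = m)
    (c : Fin 5 → R) (hc : ∀ i j, i ≠ j → IsUnit (c i - c j)) (hm : K m) (ht : K t)
    (htm : t ≤ m) (hn : n = 5 * m + t) : K n := by
  subst hR hn
  obtain ⟨T, -, hT⟩ := Finset.exists_subset_card_eq (s := (Finset.univ : Finset R)) (n := t)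
    (by simpa using htm)
  subst hT
  exact K_td T c hc hm ht FR_5 FR_6

theorem K_field (p d : ℕ) [Fact p.Prime] {m t n : ℕ} (hd : d ≠ 0) (h : m = p ^ d) (h4 : 4 ≤ m)
    (hm : K m) (ht : K t) (htm : t ≤ m) (hn : n = 4 * m + t) : K n := by
  classical
  have : Fintype (GaloisField p d) := Fintype.ofFinite _
  have hcard : Fintype.card (GaloisField p d) = m := by
    rw [← Nat.card_eq_fintype_card, GaloisField.card p d hd, h]
  obtain ⟨c⟩ : Nonempty (Fin 4 ↪ GaloisField p d) :=
    Function.Embedding.nonempty_of_card_le (by simpa [hcard] using h4)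
  exact K_four hcard c (fun i j hij => (sub_ne_zero.2 (fun e => hij (c.injective e))).isUnit)
    hm ht htm hn

theorem K_cop {m t n : ℕ} (h : Nat.Coprime 6 m) (hpos : 0 < m)
    (hm : K m) (ht : K t) (htm : t ≤ m) (hn : n = 4 * m + t) : K n := by
  have : NeZero m := ⟨hpos.ne'⟩
  have u : ∀ z : ℕ, z ∣ 6 → IsUnit (z : ZMod m) := fun z hz =>
    (ZMod.isUnit_iff_coprime z m).2 (Nat.Coprime.coprime_dvd_left hz h)
  have u1 := u 1 (by norm_num)
  have u2 := u 2 (by norm_num)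
  have u3 := u 3 (by norm_num)
  push_cast at u1 u2 u3
  refine K_four (R := ZMod m) (ZMod.card m) (fun i => ((i : ℕ) : ZMod m)) ?_ hm ht htm hn
  intro i j hij
  have : ∀ i j : Fin 4, j < i → IsUnit (((i : ℕ) : ZMod m) - ((j : ℕ) : ZMod m)) := by
    intro i j hij
    rw [← Nat.cast_sub (by omega)]
    apply u
    have : (i : ℕ) - j = 1 ∨ (i : ℕ) - j = 2 ∨ (i : ℕ) - j = 3 := by omega
    rcases this with h | h | h <;> rw [h] <;> norm_num
  rcases lt_or_gt_of_ne hij with h | h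
  · have := (this j i h).neg
    rwa [neg_sub] at this
  · exact this i j h

theorem K_five5 {t n : ℕ} (ht : K t) (htm : t ≤ 5) (hn : n = 5 * 5 + t) : K n := by
  have : Fact (Nat.Prime 5) := ⟨by norm_num⟩
  refine K_five (R := ZMod 5) (ZMod.card 5) id ?_ K_5 ht htm hn
  intro i j hij
  exact (sub_ne_zero.2 hij).isUnit

theorem K_0 : K 0 := K_of_good 0 (fun _ x => (x + 1) % 3) (by decide +kernel)

theorem K_all (n : ℕ) : K n := by
  induction n using Nat.strong_induction_on with
  | _ n ih =>
    by_cases h : n ≤ 15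
    · interval_cases n
      exacts [K_0, K_1, K_2, K_3, K_4, K_5, K_6, K_7, K_8, K_9, K_10, K_11, K_12, K_13, K_14, K_15]
    have f2 : Fact (Nat.Prime 2) := ⟨by norm_num⟩
    have f3 : Fact (Nat.Prime 3) := ⟨by norm_num⟩
    have hc : ∀ m, Nat.Coprime 6 m → 4 * m ≤ n → n ≤ 5 * m → K n := by
      intro m h1 h2 h3
      exact K_cop (t := n - 4 * m) h1 (by omega) (ih m (by omega)) (ih _ (by omega)) (by omega)
        (by omega)
    have hf : ∀ p d, Nat.Prime p → d ≠ 0 → 4 ≤ p ^ d → 4 * p ^ d ≤ n → n ≤ 5 * p ^ d → K n := by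
      intro p d hp hd h1 h2 h3
      have : Fact p.Prime := ⟨hp⟩
      exact K_field p d (t := n - 4 * p ^ d) hd rfl h1 (ih _ (by omega)) (ih _ (by omega))
        (by omega) (by omega)
    by_cases h19 : n ≤ 19
    · exact hf 2 2 (by norm_num) (by norm_num) (by norm_num) (by omega) (by omega)
    by_cases h25 : n ≤ 25
    · exact hc 5 (by norm_num) (by omega) (by omega)
    by_cases h27 : n ≤ 27
    · exact K_five5 (t := n - 25) (ih _ (by omega)) (by omega) (by omega)
    by_cases h35 : n ≤ 35
    · exact hc 7 (by norm_num) (by omega) (by omega)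
    by_cases h40 : n ≤ 40
    · exact hf 2 3 (by norm_num) (by norm_num) (by norm_num) (by omega) (by omega)
    by_cases h45 : n ≤ 45
    · exact hf 3 2 (by norm_num) (by norm_num) (by norm_num) (by omega) (by omega)
    by_cases h55 : n ≤ 55
    · exact hc 11 (by norm_num) (by omega) (by omega)
    by_cases h65 : n ≤ 65
    · exact hc 13 (by norm_num) (by omega) (by omega)
    by_cases h80 : n ≤ 80
    · exact hf 2 4 (by norm_num) (by norm_num) (by norm_num) (by omega) (by omega)
    have hcop : ∀ m, m % 6 = 1 ∨ m % 6 = 5 → Nat.Coprime 6 m := by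
      intro m hm
      rw [Nat.coprime_iff_gcd_eq_one, Nat.gcd_rec]
      rcases hm with hm | hm <;> rw [hm] <;> norm_num
    have : n / 4 % 6 = 0 ∨ n / 4 % 6 = 1 ∨ n / 4 % 6 = 2 ∨ n / 4 % 6 = 3 ∨ n / 4 % 6 = 4 ∨
      n / 4 % 6 = 5 := by omega
    rcases this with h | h | h | h | h | h
    · exact hc (n / 4 - 1) (hcop _ (by omega)) (by omega) (by omega)
    · exact hc (n / 4) (hcop _ (by omega)) (by omega) (by omega)
    · exact hc (n / 4 - 1) (hcop _ (by omega)) (by omega) (by omega)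
    · exact hc (n / 4 - 2) (hcop _ (by omega)) (by omega) (by omega)
    · exact hc (n / 4 - 3) (hcop _ (by omega)) (by omega) (by omega)
    · exact hc (n / 4) (hcop _ (by omega)) (by omega) (by omega)

section Expand

theorem colour {n : ℕ} (ρ : Fin n → Fin n) (h3 : ∀ x, ρ (ρ (ρ x)) = x) (hf : ∀ x, ρ x ≠ x) :
    ∃ c : Fin n → Fin 3, ∀ x, c (ρ x) = c x + 1 := by
  refine ⟨fun x => if x < ρ x ∧ x < ρ (ρ x) then 0 else
    if ρ (ρ x) < x ∧ ρ (ρ x) < ρ x then 1 else 2, fun x => ?_⟩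
  have e1 := hf x
  have e2 := hf (ρ x)
  have e3 := hf (ρ (ρ x))
  simp only [h3] at *
  generalize ρ (ρ x) = z at *
  generalize ρ x = y at *
  have a1 : y.val ≠ x.val := fun h => e1 (Fin.ext h)
  have a2 : z.val ≠ y.val := fun h => e2 (Fin.ext h)
  have a3 : x.val ≠ z.val := fun h => e3 (Fin.ext h)
  simp only [Fin.lt_def]
  split_ifs <;> first | rfl | omega

/-- the point of colour `j` in the orbit of `y` -/
def pt {Y : Type} (ρ : Y → Y) (c : Y → Fin 3) (y : Y) (j : Fin 3) : Y := ρ^[((j - c y : Fin 3) : ℕ)] y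

theorem pt_cases {Y : Type} (ρ : Y → Y) (c : Y → Fin 3) (y : Y) (j : Fin 3) :
    pt ρ c y j = y ∧ j = c y ∨
    pt ρ c y j = ρ y ∧ j = c y + 1 ∨ pt ρ c y j = ρ (ρ y) ∧ j = c y + 2 := by
  have : j - c y = 0 ∨ j - c y = 1 ∨ j - c y = 2 := by
    generalize j - c y = z; revert z; decide
  rcases this with h | h | h
  · left; refine ⟨by rw [pt, h]; rfl, by rw [← sub_eq_zero, h]⟩
  · right; left; refine ⟨by rw [pt, h]; rfl, by rw [← h]; abel⟩
  · right; right; refine ⟨by rw [pt, h]; rfl, by rw [← h]; abel⟩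

theorem pt_self {Y : Type} (ρ : Y → Y) (c : Y → Fin 3) (y : Y) : pt ρ c y (c y) = y := by
  simp [pt]

theorem c_pt {Y : Type} {ρ : Y → Y} {c : Y → Fin 3} (hc : ∀ x, c (ρ x) = c x + 1)
    (y : Y) (j : Fin 3) : c (pt ρ c y j) = j := by
  rcases pt_cases ρ c y j with ⟨h1, h2⟩ | ⟨h1, h2⟩ | ⟨h1, h2⟩ <;> rw [h1, h2]
  · rw [hc]
  · rw [hc, hc, add_assoc]; rfl

theorem pt_pt {Y : Type} {ρ : Y → Y} {c : Y → Fin 3} (h3 : ∀ x, ρ (ρ (ρ x)) = x)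
    (hc : ∀ x, c (ρ x) = c x + 1) (y : Y) (j j' : Fin 3) :
    pt ρ c (pt ρ c y j) j' = pt ρ c y j' := by
  have aux : ∀ y, pt ρ c (ρ y) j' = pt ρ c y j' := by
    intro y
    rcases pt_cases ρ c y j' with ⟨h1, h2⟩ | ⟨h1, h2⟩ | ⟨h1, h2⟩ <;>
    rcases pt_cases ρ c (ρ y) j' with ⟨h1', h2'⟩ | ⟨h1', h2'⟩ | ⟨h1', h2'⟩ <;>
    rw [h1, h1'] <;> rw [hc, h2] at h2' <;>
    first
    | exact h3 y
    | (exfalso; revert h2'; generalize c y = z; revert z; decide)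
  rcases pt_cases ρ c y j with ⟨h1, h2⟩ | ⟨h1, h2⟩ | ⟨h1, h2⟩ <;> rw [h1]
  · rw [aux]
  · rw [aux, aux]

theorem pt_iff {Y : Type} {ρ : Y → Y} {c : Y → Fin 3} (h3 : ∀ x, ρ (ρ (ρ x)) = x)
    (hc : ∀ x, c (ρ x) = c x + 1) (y y' : Y) (hne : y ≠ y') :
    y' = pt ρ c y (c y') ↔ (ρ y = y' ∨ ρ y' = y) := by
  constructor
  · intro h
    rcases pt_cases ρ c y (c y') with ⟨h1, h2⟩ | ⟨h1, h2⟩ | ⟨h1, h2⟩ <;> rw [h1] at h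
    · exact absurd h.symm hne
    · exact Or.inl h.symm
    · right; rw [h, h3]
  · rintro (h | h)
    · subst h
      have := pt_pt h3 hc y (c y + 1) (c (ρ y))
      have e : pt ρ c y (c y + 1) = ρ y := by simp [pt]
      rw [e, pt_self] at this; exact this
    · subst h
      have := pt_pt h3 hc y' (c y' + 1) (c y')
      have e : pt ρ c y' (c y' + 1) = ρ y' := by simp [pt]
      rw [e, pt_self] at this; exact this.symm

/-- lift a permutation of `Fin 3 × A` to a permutation of `Y × A` -/
def lift {Y A : Type} (ρ : Y → Y) (c : Y → Fin 3) (σ : Fin 3 × A → Fin 3 × A) (p : Y × A) : Y × A :=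
  (pt ρ c p.1 (σ (c p.1, p.2)).1, (σ (c p.1, p.2)).2)

theorem lift_iter {Y A : Type} {ρ : Y → Y} {c : Y → Fin 3} (h3 : ∀ x, ρ (ρ (ρ x)) = x)
    (hc : ∀ x, c (ρ x) = c x + 1) (σ : Fin 3 × A → Fin 3 × A) (m : ℕ) (p : Y × A) :
    (lift ρ c σ)^[m] p = (pt ρ c p.1 (σ^[m] (c p.1, p.2)).1, (σ^[m] (c p.1, p.2)).2) := by
  induction m with
  | zero => simp [pt_self]
  | succ m ih =>
    rw [Function.iterate_succ_apply', ih, Function.iterate_succ_apply', lift]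
    simp only [c_pt hc, pt_pt h3 hc]

theorem lift_iff {Y A : Type} {ρ : Y → Y} {c : Y → Fin 3}
    (hc : ∀ x, c (ρ x) = c x + 1) (σ : Fin 3 × A → Fin 3 × A) (p p' : Y × A) :
    lift ρ c σ p = p' ↔ p'.1 = pt ρ c p.1 (c p'.1) ∧ σ (c p.1, p.2) = (c p'.1, p'.2) := by
  constructor
  · rintro rfl
    simp only [lift, c_pt hc]
    exact ⟨trivial, trivial⟩
  · rintro ⟨h1, h2⟩
    rw [lift, h2]
    exact Prod.ext h1.symm rfl

theorem expand {N n : ℕ} {ρ : Fin (N + 1) → Fin n → Fin n}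
    (hρ : Dec (fun x y => x ≠ y) (fun _ _ => False) (fun _ => 3) ρ)
    {J : Fin (N + 1) → Type} (k : ∀ i, J i → ℕ) {A : Type}
    (σ : ∀ i, J i → Fin 3 × A → Fin 3 × A)
    (hσ : ∀ i, Dec (fun x y => x ≠ y ∧ (i = 0 ∨ x.1 ≠ y.1)) (fun _ _ => False) (k i) (σ i)) :
    ∃ τ : (Σ i, J i) → Fin n × A → Fin n × A,
      Dec (fun x y => x ≠ y) (fun _ _ => False) (fun z => k z.1 z.2) τ := by
  have h3 : ∀ i x, ρ i (ρ i (ρ i x)) = x := fun i x => hρ.cyc i x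
  have hf : ∀ i x, ρ i x ≠ x := fun i x h => (hρ.fix i x).1 h
  have := fun i => colour (ρ i) (h3 i) (hf i)
  choose c hc using this
  have symm : ∀ i y y', y' = pt (ρ i) (c i) y (c i y') → y = pt (ρ i) (c i) y' (c i y) := by
    intro i y y' h
    have := pt_pt (h3 i) (hc i) y (c i y') (c i y)
    rw [← h, pt_self] at this
    exact this.symm
  have hdir : ∀ (z : Σ i, J i) p p', (lift (ρ z.1) (c z.1) (σ z.1 z.2) p = p' ∨
      lift (ρ z.1) (c z.1) (σ z.1 z.2) p' = p) ↔ (p'.1 = pt (ρ z.1) (c z.1) p.1 (c z.1 p'.1) ∧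
      (σ z.1 z.2 (c z.1 p.1, p.2) = (c z.1 p'.1, p'.2) ∨
        σ z.1 z.2 (c z.1 p'.1, p'.2) = (c z.1 p.1, p.2))) := by
    intro z p p'
    rw [lift_iff (hc z.1), lift_iff (hc z.1)]
    constructor
    · rintro (⟨h1, h2⟩ | ⟨h1, h2⟩)
      · exact ⟨h1, Or.inl h2⟩
      · exact ⟨symm _ _ _ h1, Or.inr h2⟩
    · rintro ⟨h1, h2 | h2⟩
      · exact Or.inl ⟨h1, h2⟩
      · exact Or.inr ⟨symm _ _ _ h1, h2⟩
  have hne : ∀ i (p p' : Fin n × A), p ≠ p' → p'.1 = pt (ρ i) (c i) p.1 (c i p'.1) →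
      (c i p.1, p.2) ≠ (c i p'.1, p'.2) := by
    intro i p p' hp h1 h2
    simp only [Prod.mk.injEq] at h2
    rw [← h2.1, pt_self] at h1
    exact hp (Prod.ext h1.symm h2.2)
  have hfix : ∀ (z : Σ i, J i) p, lift (ρ z.1) (c z.1) (σ z.1 z.2) p ≠ p := by
    intro z p h
    rw [lift_iff (hc z.1)] at h
    exact ((hσ z.1).fix z.2 _).1 h.2
  refine ⟨fun z => lift (ρ z.1) (c z.1) (σ z.1 z.2), ?_, ?_, ?_, ?_, ?_⟩
  · intro z p
    rw [lift_iter (h3 z.1) (hc z.1), (hσ z.1).cyc, pt_self]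
  · intro z p
    simp [hfix z p]
  · intro z p _
    exact (hfix z p).symm
  · intro p p' hp _
    by_cases hy : p.1 = p'.1
    · have h1 : p'.1 = pt (ρ 0) (c 0) p.1 (c 0 p'.1) := by rw [hy, pt_self]
      obtain ⟨j, hj⟩ := (hσ 0).ex _ _ (hne 0 p p' hp h1) ⟨hne 0 p p' hp h1, Or.inl rfl⟩
      exact ⟨⟨0, j⟩, (hdir ⟨0, j⟩ p p').2 ⟨h1, hj⟩⟩
    · obtain ⟨i, hi⟩ := hρ.ex _ _ hy hy
      have h1 := (pt_iff (h3 i) (hc i) _ _ hy).2 hi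
      have h2 : c i p.1 ≠ c i p'.1 := by
        intro e
        rw [← e, pt_self] at h1
        exact hy h1.symm
      obtain ⟨j, hj⟩ := (hσ i).ex _ _ (hne i p p' hp h1) ⟨hne i p p' hp h1, Or.inr h2⟩
      exact ⟨⟨i, j⟩, (hdir ⟨i, j⟩ p p').2 ⟨h1, hj⟩⟩
  · rintro p p' ⟨i, j⟩ ⟨i', j'⟩ hp h h'
    obtain ⟨h1, h2⟩ := (hdir ⟨i, j⟩ p p').1 h
    obtain ⟨h1', h2'⟩ := (hdir ⟨i', j'⟩ p p').1 h'
    simp only at h1 h2 h1' h2'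
    have e : i = i' := by
      by_cases hy : p.1 = p'.1
      · have aux : ∀ i (j : J i), (σ i j (c i p.1, p.2) = (c i p'.1, p'.2) ∨
            σ i j (c i p'.1, p'.2) = (c i p.1, p.2)) → i = 0 := by
          intro i j h
          rcases h with h | h
          · have := (hσ i).adj j (c i p.1, p.2) (by simp)
            rw [h] at this
            simpa [hy] using this.2
          · have := (hσ i).adj j (c i p'.1, p'.2) (by simp)
            rw [h] at this
            simpa [hy] using this.2
        rw [aux i j h2, aux i' j' h2']
      · exact hρ.uniq _ _ i i' hy ((pt_iff (h3 i) (hc i) _ _ hy).1 h1)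
          ((pt_iff (h3 i') (hc i') _ _ hy).1 h1')
    subst e
    rw [(hσ i).uniq _ _ j j' (hne i p p' hp h1) h2 h2']

/-- ingredient -/
def ING (z : Prop) (a b : ℕ) : Prop :=
  ∃ σ : Fin a ⊕ Fin b → Fin 3 × Fin 7 → Fin 3 × Fin 7,
    Dec (fun x y => x ≠ y ∧ (z ∨ x.1 ≠ y.1)) (fun _ _ => False)
      (Sum.elim (fun _ => 3) (fun _ => 7)) σ

theorem CD.ing {s : ℕ} (h : CD s) (hs : s ≤ 7) {z : Prop} (hz : ¬ z) : ING z (7 - s) s := by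
  obtain ⟨σ, hσ⟩ := h
  refine ⟨_, (hσ.transport (Equiv.refl _)
    (finSumFinEquiv.trans (finCongr (show 7 - s + s = 7 by omega)))).congr ?_ ?_ ?_⟩
  · intro x y
    simp only [hz, false_or, Equiv.refl_apply]
    exact ⟨fun h => ⟨fun e => h (by rw [e]), h⟩, fun h => h.2⟩
  · simp
  · rintro (i | i) <;> simp

theorem HD.ing {s : ℕ} (h : HD s) (hs : s ≤ 10) {z : Prop} (hz : z) : ING z (10 - s) s := by
  obtain ⟨σ, hσ⟩ := h
  refine ⟨_, (hσ.transport (Equiv.refl _)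
    (finSumFinEquiv.trans (finCongr (show 10 - s + s = 10 by omega)))).congr ?_ ?_ ?_⟩
  · intro x y
    simp [hz]
  · simp
  · rintro (i | i) <;> simp

theorem sums (N x : ℕ) (hN : 3 ≤ N) (hx : x ≤ 7 * N) (hx1 : x ≠ 1) :
    ∃ b : Fin N → ℕ, (∀ i, b i = 0 ∨ b i = 2 ∨ b i = 3 ∨ b i = 6 ∨ b i = 7) ∧ ∑ i, b i = x := by
  induction N, hN using Nat.le_induction generalizing x with
  | base =>
    have : ∀ x < 22, x ≠ 1 → ∃ a ∈ [0, 2, 3, 6, 7], ∃ b ∈ [0, 2, 3, 6, 7], ∃ c ∈ [0, 2, 3, 6, 7],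
      a + b + c = x := by decide
    obtain ⟨a, ha, b, hb, c, hc, h⟩ := this x (by omega) hx1
    simp only [List.mem_cons, List.not_mem_nil, or_false] at ha hb hc
    refine ⟨![a, b, c], ?_, by simp [Fin.sum_univ_three, h]⟩
    intro i
    fin_cases i
    · exact ha
    · exact hb
    · exact hc
  | succ N hN ih =>
    by_cases h : x ≤ 7 * N
    · obtain ⟨b, h1, h2⟩ := ih x h hx1
      refine ⟨Fin.cons 0 b, ?_, by simp [Fin.sum_univ_succ, h2]⟩
      intro i
      refine Fin.cases ?_ (fun i => ?_) i
      · simp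
      · simpa using h1 i
    · obtain ⟨b, h1, h2⟩ := ih (x - 7) (by omega) (by omega)
      refine ⟨Fin.cons 7 b, ?_, by simp [Fin.sum_univ_succ, h2]; omega⟩
      intro i
      refine Fin.cases ?_ (fun i => ?_) i
      · simp
      · simpa using h1 i

theorem sums' (N s : ℕ) (hN : 3 ≤ N) (hs : s ≤ 7 * N + 9) :
    ∃ b : Fin (N + 1) → ℕ, (b 0 = 0 ∨ b 0 = 1 ∨ b 0 = 10) ∧
      (∀ i, i ≠ 0 → b i = 0 ∨ b i = 2 ∨ b i = 3 ∨ b i = 6 ∨ b i = 7) ∧ ∑ i, b i = s := by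
  have key : ∀ s0 x, (s0 = 0 ∨ s0 = 1 ∨ s0 = 10) → x ≤ 7 * N → x ≠ 1 → s = s0 + x →
      ∃ b : Fin (N + 1) → ℕ, (b 0 = 0 ∨ b 0 = 1 ∨ b 0 = 10) ∧
      (∀ i, i ≠ 0 → b i = 0 ∨ b i = 2 ∨ b i = 3 ∨ b i = 6 ∨ b i = 7) ∧ ∑ i, b i = s := by
    intro s0 x h0 h1 h2 h3
    obtain ⟨b, hb1, hb2⟩ := sums N x hN h1 h2
    refine ⟨Fin.cons s0 b, by simpa using h0, ?_, by simp [Fin.sum_univ_succ, hb2, h3]⟩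
    intro i
    refine Fin.cases ?_ (fun i => ?_) i
    · simp
    · intro _; simpa using hb1 i
  by_cases h1 : s = 1
  · exact key 1 0 (by simp) (by omega) (by omega) (by omega)
  by_cases h2 : s ≤ 7 * N
  · exact key 0 s (by simp) (by omega) (by omega) (by omega)
  · exact key 10 (s - 10) (by simp) (by omega) (by omega) (by omega)

theorem main_dec (t r s : ℕ) (ht : 1 ≤ t) (hr : 1 ≤ r) (hrs : r + s = 21 * t + 10) :
    ∃ τ : Fin r ⊕ Fin s → Fin (6 * t + 3) × Fin 7 → Fin (6 * t + 3) × Fin 7,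
      Dec (fun x y => x ≠ y) (fun _ _ => False) (Sum.elim (fun _ => 3) (fun _ => 7)) τ := by
  obtain ⟨ρ, hρ⟩ := K_all t
  obtain ⟨b, hb0, hb1, hb⟩ := sums' (3 * t) s (by omega) (by omega)
  let m : Fin (3 * t + 1) → ℕ := fun i => if i = 0 then 10 else 7
  have hbm : ∀ i, b i ≤ m i := by
    intro i
    simp only [m]
    split_ifs with h
    · subst h; omega
    · have := hb1 i h; omega
  have hing : ∀ i, ING (i = 0) (m i - b i) (b i) := by
    intro i
    simp only [m]
    by_cases h : i = 0
    · rw [if_pos h]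
      subst h
      rcases hb0 with e | e | e <;> rw [e]
      · exact HD_0.ing (by norm_num) rfl
      · exact HD_1.ing (by norm_num) rfl
      · exact HD_10.ing (by norm_num) rfl
    · rw [if_neg h]
      rcases hb1 i h with e | e | e | e | e <;> rw [e]
      · exact CD_0.ing (by norm_num) h
      · exact CD_2.ing (by norm_num) h
      · exact CD_3.ing (by norm_num) h
      · exact CD_6.ing (by norm_num) h
      · exact CD_7.ing (by norm_num) h
  choose σ hσ using hing
  obtain ⟨τ, hτ⟩ := expand hρ _ σ hσ
  have hm : ∑ i, m i = 21 * t + 10 := by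
    rw [Fin.sum_univ_succ]
    simp [m, Fin.succ_ne_zero]; ring
  have e1 : Fin r ≃ Σ i, Fin (m i - b i) := Fintype.equivOfCardEq (by
    simp only [Fintype.card_sigma, Fintype.card_fin]
    have : ∑ i, (m i - b i) + ∑ i, b i = ∑ i, m i := by
      rw [← Finset.sum_add_distrib]
      exact Finset.sum_congr rfl (fun i _ => Nat.sub_add_cancel (hbm i))
    omega)
  have e2 : Fin s ≃ Σ i, Fin (b i) := Fintype.equivOfCardEq (by simp [hb])
  refine ⟨_, (hτ.transport (Equiv.refl _)
    ((Equiv.sumCongr e1 e2).trans (Equiv.sigmaSumDistrib _ _).symm)).congr ?_ ?_ ?_⟩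
  · simp
  · simp
  · rintro (i | i) <;> rfl

end Expand

section Final

/-- the graph of a permutation -/
def grph {V : Type} (σ : V → V) : SimpleGraph V where
  Adj x y := x ≠ y ∧ (σ x = y ∨ σ y = x)
  symm := ⟨fun _ _ h => ⟨h.1.symm, h.2.symm⟩⟩
  loopless := ⟨fun _ h => h.1 rfl⟩

theorem isCycleFactor_grph {V : Type} (σ : V → V) (k : ℕ) (hk : k.Prime) 
    (hc : ∀ x, σ^[k] x = x) (hf : ∀ x, σ x ≠ x) : IsCycleFactor k (grph σ) := by
  intro C
  obtain ⟨x0, rfl⟩ := C.exists_rep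
  have hk2 := hk.two_le
  have : NeZero k := ⟨by omega⟩
  have : Fact k.Prime := ⟨hk⟩
  have hper : Function.IsPeriodicPt σ k x0 := hc x0
  have hmin : Function.minimalPeriod σ x0 = k := Function.minimalPeriod_eq_prime hper (hf x0)
  let f : Fin k → V := fun i => σ^[(i : ℕ)] x0
  have hinj : Function.Injective f := by
    intro i j hij
    apply Fin.ext
    exact (Function.iterate_eq_iterate_iff_of_lt_minimalPeriod (by rw [hmin]; exact i.2)
      (by rw [hmin]; exact j.2)).1 hij
  have hstep : ∀ i, f (i + 1) = σ (f i) := by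
    intro i
    simp only [f]
    rw [← Function.iterate_succ_apply' σ, Fin.val_add, Fin.val_one', Nat.add_mod_mod]
    exact hper.iterate_mod_apply _
  have hadj : ∀ i j, (grph σ).Adj (f i) (f j) ↔ i ≠ j ∧ (i + 1 = j ∨ j + 1 = i) := by
    intro i j
    simp only [grph]
    rw [← hstep, ← hstep, Ne, hinj.eq_iff, hinj.eq_iff, hinj.eq_iff]
  have hclosed : ∀ x y, (grph σ).Adj x y → (∃ i, f i = x) → ∃ i, f i = y := by
    rintro x y ⟨-, h | h⟩ ⟨i, rfl⟩
    · exact ⟨i + 1, by rw [hstep, h]⟩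
    · refine ⟨i - 1, ?_⟩
      have h1 : σ (f (i - 1)) = σ y := by rw [← hstep, h]; simp
      have : Function.Injective σ := by
        have : Function.Injective (σ^[k]) := by
          intro a b hab; simpa [hc] using hab
        obtain ⟨m, hm⟩ : ∃ m, k = m + 1 := ⟨k - 1, by omega⟩
        rw [hm, Function.iterate_succ] at this
        exact this.of_comp
      exact this h1
  have hf0 : f 0 = x0 := by simp [f]
  have hreach : ∀ y, (grph σ).Reachable x0 y → ∃ i, f i = y := by
    rintro y ⟨w⟩
    have : ∀ {x y} (w : (grph σ).Walk x y), (∃ i, f i = x) → ∃ i, f i = y := by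
      intro x y w
      induction w with
      | nil => exact id
      | cons h _ ih => exact fun h' => ih (hclosed _ _ h h')
    exact this w ⟨0, hf0⟩
  have hsteps : ∀ i, (grph σ).Reachable x0 (f i) := by
    have : ∀ m : ℕ, (grph σ).Reachable x0 (σ^[m] x0) := by
      intro m
      induction m with
      | zero => exact SimpleGraph.Reachable.refl _
      | succ m ih =>
        rw [Function.iterate_succ_apply']
        exact ih.trans (SimpleGraph.Adj.reachable ⟨(hf _).symm, Or.inl rfl⟩)
    exact fun i => this i
  let e : Fin k ≃ ((grph σ).connectedComponentMk x0).supp := Equiv.ofBijective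
    (fun i => ⟨f i, by
      rw [SimpleGraph.ConnectedComponent.mem_supp_iff, SimpleGraph.ConnectedComponent.eq]
      exact (hsteps i).symm⟩)
    ⟨fun i j h => hinj (Subtype.ext_iff.1 h), by
      rintro ⟨y, hy⟩
      rw [SimpleGraph.ConnectedComponent.mem_supp_iff, SimpleGraph.ConnectedComponent.eq] at hy
      obtain ⟨i, hi⟩ := hreach y hy.symm
      exact ⟨i, Subtype.ext hi⟩⟩
  refine ⟨SimpleGraph.Iso.symm ⟨e, ?_⟩⟩
  intro i j
  change (grph σ).Adj (f i) (f j) ↔ _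
  rw [hadj]
  obtain ⟨m, rfl⟩ : ∃ m, k = m + 2 := ⟨k - 2, by omega⟩
  rw [SimpleGraph.cycleGraph_adj]
  constructor
  · rintro ⟨-, h | h⟩
    · right; rw [← h]; simp
    · left; rw [← h]; simp
  · rintro (h | h)
    · refine ⟨?_, Or.inr (by rw [← h]; abel)⟩
      rintro rfl; simp at h
    · refine ⟨?_, Or.inl (by rw [← h]; abel)⟩
      rintro rfl; simp at h

end Final

end HWP

/-- For every `n ≡ 21 (mod 42)` with `n > 21` and all positive `r, s` with
`r + s = (n-1)/2`, an `HW(n; r, s; 3, 7)` exists, i.e. `K_n` decomposes into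
`r` `C₃`-factors and `s` `C₇`-factors. -/
theorem HW_large (n r s : ℕ) (hn : n % 42 = 21) (hn' : 21 < n)
    (hr : 0 < r) (hs : 0 < s) (hrs : r + s = (n - 1) / 2) :
    IsCycleDecomp (⊤ : SimpleGraph (Fin n)) 3 7 r s := by
  obtain ⟨t, ht⟩ : ∃ t, n = 42 * t + 21 := ⟨n / 42, by omega⟩
  obtain ⟨τ, hτ⟩ := HWP.main_dec t r s (by omega) hr (by omega)
  have e : Fin n ≃ Fin (6 * t + 3) × Fin 7 := Fintype.equivOfCardEq (by simp; omega)
  have h := hτ.transport e (Equiv.refl _)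
  generalize (fun (i : Fin r ⊕ Fin s) x => e.symm (τ ((Equiv.refl _) i) (e x))) = σ at h
  have hf : ∀ i x, σ i x ≠ x := fun i x hx => (h.fix i x).1 hx
  refine ⟨fun i => HWP.grph (σ i), fun i => le_top, ?_, ?_, ?_⟩
  · intro p
    induction p with
    | _ x y =>
    intro hxy
    rw [SimpleGraph.mem_edgeSet, SimpleGraph.top_adj] at hxy
    obtain ⟨i, hi⟩ := h.ex x y hxy (by simpa using hxy)
    refine ⟨i, ⟨hxy, hi⟩, ?_⟩
    intro j hj
    exact h.uniq x y j i hxy hj.2 hi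
  · intro i
    exact HWP.isCycleFactor_grph _ 3 (by norm_num) (fun x => h.cyc (Sum.inl i) x) (hf _)
  · intro i
    exact HWP.isCycleFactor_grph _ 7 (by norm_num) (fun x => h.cyc (Sum.inr i) x) (hf _)
end
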